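/- arXiv:1806.09726 — 2 statements merged into one kernel-verified Lean document; each statement's English description precedes it below -/
import Mathlib

section
/- There is a constant C > 0 such that f(K₃, p) ≤ C·p^(−3/2) for all p ∈ (0,1), and for every integer m ≥ 4 there is a constant C_m > 0 such that f(K_m, p) ≤ C_m · p^(−2m/3 + c_m) for all p ∈ (0,1), where c_m = m/(2m−3) if m ≡ 0 (mod 3), c_m = 2/3 if m ≡ 1 (mod 3), and c_m = (2m+8)/(6m−3) if m ≡ 2 (mod 3). -/
open scoped Classical

namespace OnlineRamseyGame

/-- A valid Builder strategy: it never builds a loop, and along any play the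
edges built are pairwise distinct. -/
def ValidBuilder {V : Type*} (B : List Bool → Sym2 V) : Prop :=
  (∀ h : List Bool, ¬ (B h).IsDiag) ∧
  ∀ h : List Bool, ∀ i : ℕ, i < h.length → B (h.take i) ≠ B h

/-- The history (as a list) of the first `t` values of the color sequence `x`. -/
def histSeq (x : ℕ → Bool) (t : ℕ) : List Bool := (List.range t).map x

/-- Extend a finite color sequence to an infinite one (by `false`). -/
def extSeq {N : ℕ} (x : Fin N → Bool) : ℕ → Bool :=
  fun t => if h : t < N then x ⟨t, h⟩ else false

/-- The probability of the outcome `x` when each turn is independently `true`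
with probability `p` and `false` with probability `1 - p`. -/
noncomputable def weight (p : ℝ) {N : ℕ} (x : Fin N → Bool) : ℝ :=
  ∏ i, if x i then p else 1 - p

/-- The graph of successful queries (within the first `N` queries) contains a
copy of `H`. -/
def ContainsCopy {V : Type*} (H : SimpleGraph V) (edge : ℕ → Sym2 ℕ)
    (x : ℕ → Bool) (N : ℕ) : Prop :=
  ∃ f : V → ℕ, Function.Injective f ∧
    ∀ u v : V, H.Adj u v → ∃ t, t < N ∧ edge t = s(f u, f v) ∧ x t = true

/-- The probability that strategy `Q` finds a copy of `H` within `N` queries in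
the Subgraph Query Game with parameter `p`. -/
noncomputable def queryProb {V : Type*} (H : SimpleGraph V)
    (Q : List Bool → Sym2 ℕ) (N : ℕ) (p : ℝ) : ℝ :=
  ∑ x : Fin N → Bool, weight p x *
    (if ContainsCopy H (fun t => Q (histSeq (extSeq x) t)) (extSeq x) N then 1 else 0)

/-- `f(H,p)`: the least `N` such that some valid strategy finds a copy of `H`
within `N` queries with probability at least `1/2`. -/
noncomputable def fQuery {V : Type*} (H : SimpleGraph V) (p : ℝ) : ℕ :=
  sInf {N | ∃ Q : List Bool → Sym2 ℕ, ValidBuilder Q ∧ (1 : ℝ) / 2 ≤ queryProb H Q N p}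

/-- The complete graph on `m` vertices. -/
abbrev K (m : ℕ) : SimpleGraph (Fin m) := ⊤

/-!
Builder queries inside a random blow-up of `H`: each vertex `v` is replaced by a part of about
`p ^ (-a v)` vertices, and only pairs belonging to a transversal copy of `H` are of interest. If
every induced subgraph `H[S]` has at most `∑ v ∈ S, a v` edges, then, by the second moment method,
the blow-up contains a transversal copy of `H` with probability at least `3 / 4`. To find it,
Builder looks for the edges of `H` in a suitable order, and queries a candidate pair for `e` only if
it would complete a copy of a prescribed induced subgraph `H[support e]` all of whose other edges
have already been found. By Markov's inequality the number of such pairs exceeds four times its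
expectation with probability at most `1 / 4`, so Builder wins with probability at least `1 / 2`.

For `K m` the part sizes are `p ^ 0, p ^ (-1), …, p ^ (-(t - 2)), p ^ (-(t - 1 + s))` followed by
`m - t` parts of size `p ^ (-b)`, where `p ^ (-b)` is the order of the number of queries, and a pair
in the parts `i < j` is queried once its endpoints are joined to a clique on the first `min i t`
parts. The number `t` is about `m / 3`, and `s` and `b` are chosen such that `K m` has just enough
room to appear.
-/

open MeasureTheory ProbabilityTheory
open scoped unitInterval

section Moments

variable {Ω ι : Type*} [MeasurableSpace Ω] {μ : Measure Ω} [IsFiniteMeasure μ]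
  {s : Finset ι} {A : ι → Set Ω}

lemma memLp_sum_indicator_one (hA : ∀ i ∈ s, MeasurableSet (A i)) (q : ENNReal) :
    MemLp (fun ω => ∑ i ∈ s, (A i).indicator (1 : Ω → ℝ) ω) q μ :=
  memLp_finsetSum s fun i hi => memLp_indicator_const q (hA i hi) 1 (.inr (measure_ne_top μ _))

lemma integral_sum_indicator_one (hA : ∀ i ∈ s, MeasurableSet (A i)) :
    ∫ ω, ∑ i ∈ s, (A i).indicator (1 : Ω → ℝ) ω ∂μ = ∑ i ∈ s, μ.real (A i) := by
  rw [integral_finsetSum s fun i hi => (integrable_const 1).indicator (hA i hi)]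
  exact Finset.sum_congr rfl fun i hi => integral_indicator_one (hA i hi)

lemma integral_sum_indicator_one_sq (hA : ∀ i ∈ s, MeasurableSet (A i)) :
    ∫ ω, (∑ i ∈ s, (A i).indicator (1 : Ω → ℝ) ω) ^ 2 ∂μ =
      ∑ i ∈ s, ∑ j ∈ s, μ.real (A i ∩ A j) := by
  have hpairs (ω : Ω) : (∑ i ∈ s, (A i).indicator (1 : Ω → ℝ) ω) ^ 2 =
      ∑ ij ∈ s ×ˢ s, (A ij.1 ∩ A ij.2).indicator 1 ω := by
    rw [sq, Finset.sum_mul_sum, Finset.sum_product]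
    simp only [Set.inter_indicator_one, Pi.mul_apply]
  simp only [hpairs]
  rw [integral_sum_indicator_one, Finset.sum_product]
  simp only [Finset.mem_product]
  exact fun ij h => (hA _ h.1).inter (hA _ h.2)

lemma measureReal_le_sum_indicator_one_le (hA : ∀ i ∈ s, MeasurableSet (A i)) {N : ℝ}
    (hN : 0 < N) :
    μ.real {ω | N ≤ ∑ i ∈ s, (A i).indicator (1 : Ω → ℝ) ω} ≤ (∑ i ∈ s, μ.real (A i)) / N := by
  rw [le_div_iff₀' hN, ← integral_sum_indicator_one hA]
  exact mul_meas_ge_le_integral_of_nonneg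
    (.of_forall fun ω => Finset.sum_nonneg fun i _ =>
      Set.indicator_nonneg (fun _ _ => zero_le_one) ω)
    (memLp_one_iff_integrable.1 (memLp_sum_indicator_one hA 1)) N

lemma measureReal_forall_notMem_le {μ : Measure Ω} [IsProbabilityMeasure μ]
    (hA : ∀ i ∈ s, MeasurableSet (A i)) (hpos : 0 < ∑ i ∈ s, μ.real (A i)) :
    μ.real {ω | ∀ i ∈ s, ω ∉ A i} ≤
      (∑ i ∈ s, ∑ j ∈ s, μ.real (A i ∩ A j)) / (∑ i ∈ s, μ.real (A i)) ^ 2 - 1 := by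
  set X : Ω → ℝ := fun ω => ∑ i ∈ s, (A i).indicator (1 : Ω → ℝ) ω
  have hX : MemLp X 2 μ := memLp_sum_indicator_one hA 2
  have hmean : μ[X] = ∑ i ∈ s, μ.real (A i) := integral_sum_indicator_one hA
  have hvar : variance X μ =
      ∑ i ∈ s, ∑ j ∈ s, μ.real (A i ∩ A j) - (∑ i ∈ s, μ.real (A i)) ^ 2 := by
    rw [variance_eq_sub hX, hmean, ← integral_sum_indicator_one_sq hA]
    rfl
  have hsub : {ω | ∀ i ∈ s, ω ∉ A i} ⊆ {ω | μ[X] ≤ |X ω - μ[X]|} := by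
    intro ω hω
    have hXω : X ω = 0 :=
      Finset.sum_eq_zero fun i hi => Set.indicator_of_notMem (hω i hi) _
    simp [hXω, le_abs_self]
  calc μ.real {ω | ∀ i ∈ s, ω ∉ A i}
      ≤ μ.real {ω | μ[X] ≤ |X ω - μ[X]|} := measureReal_mono hsub
    _ ≤ variance X μ / μ[X] ^ 2 :=
        ENNReal.toReal_le_of_le_ofReal (div_nonneg (variance_nonneg X μ) (sq_nonneg _))
          (meas_ge_le_variance_div_sq hX (hmean ▸ hpos))
    _ = _ := by rw [hvar, hmean, sub_div, div_self (pow_pos hpos 2).ne']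

end Moments

section Answers

variable {E : Type*}

/-- The law of independent answers, each equal to `true` with probability `p`, to all the possible
queries `e : E`, so that a whole play is a function of a single random point. -/
noncomputable def answerMeasure (E : Type*) (p : I) : Measure (E → Bool) :=
  Measure.infinitePi fun _ => bernoulliMeasure true false p

instance (p : I) : IsProbabilityMeasure (answerMeasure E p) :=
  inferInstanceAs (IsProbabilityMeasure (Measure.infinitePi _))

lemma answerMeasure_real_forall_eq {κ : Type*} [Fintype κ] (p : I) {e : κ → E}
    (he : e.Injective) (x : κ → Bool) :
    (answerMeasure E p).real {ω | ∀ t, ω (e t) = x t} = ∏ t, if x t then (p : ℝ) else 1 - p := by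
  have hcyl : {ω : E → Bool | ∀ t, ω (e t) = x t} =
      Set.pi (Finset.univ.map ⟨e, he⟩) fun d => {e.extend x (fun _ => false) d} := by
    ext ω
    simp [Set.mem_pi, he.extend_apply]
  have hfactor (t : κ) : (bernoulliMeasure true false p).real {x t} =
      if x t then (p : ℝ) else 1 - p := by
    cases h : x t <;> simp
  rw [hcyl, measureReal_def, answerMeasure,
    Measure.infinitePi_pi _ fun _ _ => MeasurableSet.of_discrete, ENNReal.toReal_prod,
    Finset.prod_map]
  simp only [Function.Embedding.coeFn_mk, he.extend_apply, ← measureReal_def, hfactor]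

lemma answerMeasure_real_forall_true (p : I) (T : Finset E) :
    (answerMeasure E p).real {ω | ∀ e ∈ T, ω e = true} = (p : ℝ) ^ T.card := by
  have h := answerMeasure_real_forall_eq p (Subtype.val_injective (p := (· ∈ T))) fun _ => true
  simpa using h

lemma measurableSet_forall_true (T : Finset E) :
    MeasurableSet {ω : E → Bool | ∀ e ∈ T, ω e = true} := by
  simp only [Set.ofPred_forall]
  exact T.measurableSet_biInter fun e _ =>
    measurableSet_eq_fun (measurable_pi_apply e) measurable_const

end Answers

section Play

variable {E V W : Type*}

/-- The answers received in the first `t` turns when `B` plays against the predetermined answers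
`ω`. -/
def history (B : List Bool → E) (ω : E → Bool) : ℕ → List Bool
  | 0 => []
  | t + 1 => history B ω t ++ [ω (B (history B ω t))]

/-- The query made in turn `t` (counted from `0`) when `B` plays against the predetermined answers
`ω`. -/
def queries (B : List Bool → E) (ω : E → Bool) (t : ℕ) : E :=
  B (history B ω t)

lemma histSeq_comp_queries (B : List Bool → E) (ω : E → Bool) (t : ℕ) :
    histSeq (ω ∘ queries B ω) t = history B ω t := by
  induction t with
  | zero => rfl
  | succ t ih =>
    rw [history, ← ih, histSeq, List.range_succ, List.map_append, List.map_singleton,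
      Function.comp_apply, queries, ← ih, histSeq]

lemma histSeq_congr {x y : ℕ → Bool} {t : ℕ} (h : ∀ s < t, x s = y s) :
    histSeq x t = histSeq y t :=
  List.map_congr_left fun s hs => h s (List.mem_range.1 hs)

lemma ValidBuilder.injective_histSeq {B : List Bool → Sym2 V} (hB : ValidBuilder B)
    (x : ℕ → Bool) : Function.Injective fun t => B (histSeq x t) := by
  refine Function.Injective.of_lt_imp_ne fun s t hst => ?_
  have htake : (histSeq x t).take s = histSeq x s := by
    rw [histSeq, ← List.map_take, List.take_range, min_eq_left hst.le, histSeq]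
  exact htake ▸ hB.2 (histSeq x t) s (by simpa [histSeq] using hst)

lemma ValidBuilder.queries_injective {B : List Bool → Sym2 V} (hB : ValidBuilder B)
    (ω : Sym2 V → Bool) : Function.Injective (queries B ω) := by
  have h := hB.injective_histSeq (ω ∘ queries B ω)
  simp only [histSeq_comp_queries] at h
  exact h

lemma ContainsCopy.congr {H : SimpleGraph V} {edge edge' : ℕ → Sym2 ℕ} {x x' : ℕ → Bool} {N : ℕ}
    (h : ContainsCopy H edge x N) (hedge : ∀ t < N, edge t = edge' t) (hx : ∀ t < N, x t = x' t) :
    ContainsCopy H edge' x' N := by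
  obtain ⟨f, hf, hcopy⟩ := h
  refine ⟨f, hf, fun u v huv => ?_⟩
  obtain ⟨t, ht, he, hxt⟩ := hcopy u v huv
  exact ⟨t, ht, hedge t ht ▸ he, hx t ht ▸ hxt⟩

lemma answerMeasure_real_play {Q : List Bool → Sym2 V} (hQ : ValidBuilder Q) (p : I) {N : ℕ}
    (x : Fin N → Bool) :
    (answerMeasure (Sym2 V) p).real {ω | ∀ t : Fin N, ω (Q (histSeq (extSeq x) t)) = x t} =
      weight p x :=
  answerMeasure_real_forall_eq p ((hQ.injective_histSeq _).comp Fin.val_injective) x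

lemma answerMeasure_real_containsCopy_le_queryProb {H : SimpleGraph W} {Q : List Bool → Sym2 ℕ}
    (hQ : ValidBuilder Q) (p : I) (N : ℕ) :
    (answerMeasure (Sym2 ℕ) p).real
        {ω | ContainsCopy H (queries Q ω) (ω ∘ queries Q ω) N} ≤ queryProb H Q N p := by
  set good : Finset (Fin N → Bool) := Finset.univ.filter fun x =>
    ContainsCopy H (fun t => Q (histSeq (extSeq x) t)) (extSeq x) N
  set cylinder : (Fin N → Bool) → Set (Sym2 ℕ → Bool) := fun x =>
    {ω | ∀ t : Fin N, ω (Q (histSeq (extSeq x) t)) = x t}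
  have hcover : {ω | ContainsCopy H (queries Q ω) (ω ∘ queries Q ω) N} ⊆
      ⋃ x ∈ good, cylinder x := by
    intro ω hω
    set x : Fin N → Bool := fun t => ω (queries Q ω t)
    have hx : ∀ t < N, (ω ∘ queries Q ω) t = extSeq x t := fun t ht => by simp [extSeq, ht, x]
    have hhist : ∀ t < N, queries Q ω t = Q (histSeq (extSeq x) t) := fun t ht => by
      rw [queries, ← histSeq_comp_queries, histSeq_congr fun s hs => hx s (hs.trans ht)]
    exact Set.mem_biUnion (Finset.mem_filter.2 ⟨Finset.mem_univ x, hω.congr hhist hx⟩)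
      fun t => by rw [← hhist t t.2]
  calc (answerMeasure (Sym2 ℕ) p).real {ω | ContainsCopy H (queries Q ω) (ω ∘ queries Q ω) N}
      ≤ (answerMeasure (Sym2 ℕ) p).real (⋃ x ∈ good, cylinder x) :=
        measureReal_mono hcover (measure_ne_top _ _)
    _ ≤ ∑ x ∈ good, (answerMeasure (Sym2 ℕ) p).real (cylinder x) :=
        measureReal_biUnion_finset_le _ _
    _ = queryProb H Q N p := by
        simp only [cylinder, answerMeasure_real_play hQ p, queryProb, mul_ite, mul_one, mul_zero,
          good, Finset.sum_filter]

end Play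

section Greedy

variable {V : Type*}

/-- The queries answered so far, with their answers, along the history `h` of a builder choosing
each query by applying `next` to the transcript. -/
noncomputable def transcript (next : Finset (Sym2 V × Bool) → Sym2 V) (h : List Bool) :
    Finset (Sym2 V × Bool) :=
  h.foldl (fun T b => insert (next T, b) T) ∅

lemma transcript_append_singleton (next : Finset (Sym2 V × Bool) → Sym2 V) (h : List Bool)
    (b : Bool) : transcript next (h ++ [b]) =
      insert (next (transcript next h), b) (transcript next h) := by
  simp only [transcript, List.foldl_append, List.foldl_cons, List.foldl_nil]

lemma exists_mem_transcript {next : Finset (Sym2 V × Bool) → Sym2 V} (h : List Bool) {i : ℕ}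
    (hi : i < h.length) : ∃ b, (next (transcript next (h.take i)), b) ∈ transcript next h := by
  induction h using List.reverseRecOn with
  | nil => exact absurd hi (Nat.not_lt_zero i)
  | append_singleton h b ih =>
    rw [transcript_append_singleton]
    rcases Nat.lt_or_ge i h.length with hlt | hge
    · rw [List.take_append_of_le_length hlt.le]
      exact (ih hlt).imp fun _ => Finset.mem_insert_of_mem
    · obtain rfl : i = h.length := le_antisymm (by simpa [Nat.lt_succ_iff] using hi) hge
      rw [List.take_left]
      exact ⟨b, Finset.mem_insert_self _ _⟩

lemma validBuilder_transcript {next : Finset (Sym2 V × Bool) → Sym2 V}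
    (hdiag : ∀ T, ¬ (next T).IsDiag) (hfresh : ∀ T b, (next T, b) ∉ T) :
    ValidBuilder fun h => next (transcript next h) := by
  refine ⟨fun h => hdiag _, fun h i hi heq => ?_⟩
  obtain ⟨b, hb⟩ := exists_mem_transcript (next := next) h hi
  exact hfresh _ b (heq.subst (motive := fun e => (e, b) ∈ transcript next h) hb)

lemma mem_transcript_history {next : Finset (Sym2 V × Bool) → Sym2 V} {B : List Bool → Sym2 V}
    (hB : ∀ h, B h = next (transcript next h)) (ω : Sym2 V → Bool) (t : ℕ) (e : Sym2 V) (b : Bool) :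
    (e, b) ∈ transcript next (history B ω t) ↔ e ∈ queries B ω '' Set.Iio t ∧ ω e = b := by
  induction t with
  | zero => simp [history, transcript]
  | succ t ih =>
    have hquery : next (transcript next (history B ω t)) = queries B ω t := (hB _).symm
    rw [history, transcript_append_singleton, Finset.mem_insert, ih, hB, hquery, Prod.mk.injEq,
      ← Order.succ_eq_add_one, Order.Iio_succ_eq_insert, Set.image_insert_eq,
      Set.mem_insert_iff, or_and_right]
    refine or_congr_left (and_congr_right fun he => ?_)
    rw [he, eq_comm]

lemma exists_not_isDiag_forall_notMem [Infinite V] (T : Finset (Sym2 V × Bool)) :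
    ∃ e : Sym2 V, ¬ e.IsDiag ∧ ∀ b, (e, b) ∉ T := by
  obtain ⟨v⟩ : Nonempty V := inferInstance
  have hinf : ((fun w => s(v, w)) '' {v}ᶜ).Infinite :=
    (Set.finite_singleton v).infinite_compl.image fun _ _ _ _ h => Sym2.congr_right.1 h
  obtain ⟨_, ⟨w, hw, rfl⟩, hfresh⟩ := hinf.exists_notMem_finset (T.image Prod.fst)
  refine ⟨_, fun h => hw (Sym2.mk_isDiag_iff.1 h).symm, fun b hb => ?_⟩
  exact hfresh (Finset.mem_image_of_mem Prod.fst hb)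

lemma exists_greedy_builder [Infinite V] {rule : Set (Sym2 V) → Set (Sym2 V)}
    (hmono : Monotone rule) (hdiag : ∀ X, ∀ e ∈ rule X, ¬ e.IsDiag) :
    ∃ B : List Bool → Sym2 V, ValidBuilder B ∧ ∀ ω (N : ℕ),
      (rule {e | ω e = true}).encard ≤ N → ∃ A ⊆ queries B ω '' Set.Iio N,
        rule {e ∈ A | ω e = true} ⊆ A := by
  have hnext (T : Finset (Sym2 V × Bool)) : ∃ e : Sym2 V, (¬ e.IsDiag ∧ ∀ b, (e, b) ∉ T) ∧
      (rule {e | (e, true) ∈ T} ⊆ {e | ∃ b, (e, b) ∈ T} ∨ e ∈ rule {e | (e, true) ∈ T}) := by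
    by_cases hclosed : rule {e | (e, true) ∈ T} ⊆ {e | ∃ b, (e, b) ∈ T}
    · exact (exists_not_isDiag_forall_notMem T).imp fun e he => ⟨he, .inl hclosed⟩
    · obtain ⟨e, he, hfresh⟩ := Set.not_subset.1 hclosed
      exact ⟨e, ⟨hdiag _ e he, not_exists.1 hfresh⟩, .inr he⟩
  choose next hvalid hrule using hnext
  set B : List Bool → Sym2 V := fun h => next (transcript next h)
  have hB : ValidBuilder B := validBuilder_transcript (fun T => (hvalid T).1) fun T => (hvalid T).2
  refine ⟨B, hB, fun ω N hN => ?_⟩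
  have hturn (t : ℕ) : rule {e ∈ queries B ω '' Set.Iio t | ω e = true} ⊆ queries B ω '' Set.Iio t ∨
      queries B ω t ∈ rule {e ∈ queries B ω '' Set.Iio t | ω e = true} := by
    have h := hrule (transcript next (history B ω t))
    simp only [mem_transcript_history (B := B) fun _ => rfl, exists_and_left, exists_eq',
      and_true] at h
    exact h
  by_contra! hopen
  have hmem : queries B ω '' Set.Iio (N + 1) ⊆ rule {e | ω e = true} := by
    rintro _ ⟨t, ht, rfl⟩
    refine hmono (fun e he => he.2) ((hturn t).resolve_left (hopen _ ?_))
    exact Set.image_mono (Set.Iio_subset_Iio (Nat.lt_succ_iff.1 ht))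
  have hcard := (Set.encard_le_encard hmem).trans hN
  rw [(hB.queries_injective ω).encard_image, ← Finset.coe_Iio, Set.encard_coe_eq_coe_finsetCard,
    Nat.card_Iio, Nat.cast_le] at hcard
  exact hcard.not_gt N.lt_succ_self

end Greedy

section Box

variable {V : Type*} [Fintype V]

/-- The maps assigning to each vertex of `S` a label below `n`, and the dummy label `0` to the other
vertices. They index the transversal copies of `S` in the blow-up of `V` with parts of sizes `n`. -/
noncomputable def box (n : V → ℕ) (S : Finset V) : Finset (V → ℕ) :=
  Fintype.piFinset fun v => if v ∈ S then Finset.range (n v) else {0}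

lemma card_box (n : V → ℕ) (S : Finset V) : (box n S).card = ∏ v ∈ S, n v := by
  simp only [box, Fintype.card_piFinset, apply_ite Finset.card, Finset.card_range,
    Finset.card_singleton, Finset.prod_ite_mem, Finset.univ_inter]

lemma card_filter_agree_mul {n φ : V → ℕ} (hφ : φ ∈ box n Finset.univ) (S : Finset V) :
    ((box n Finset.univ).filter fun ψ => ∀ v ∈ S, φ v = ψ v).card * ∏ v ∈ S, n v =
      ∏ v, n v := by
  have hagree : ((box n Finset.univ).filter fun ψ => ∀ v ∈ S, φ v = ψ v) =
      Fintype.piFinset fun v => if v ∈ S then {φ v} else Finset.range (n v) := by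
    simp only [box, Finset.mem_univ, if_true, Fintype.mem_piFinset] at hφ ⊢
    ext ψ
    simp only [Finset.mem_filter, Fintype.mem_piFinset, ← forall_and]
    refine forall_congr' fun v => ?_
    by_cases hv : v ∈ S
    · simpa [hv, eq_comm] using fun h : φ v = ψ v => h ▸ Finset.mem_range.1 (hφ v)
    · simp [hv]
  rw [hagree, Fintype.card_piFinset, ← Finset.prod_compl_mul_prod S n]
  simp only [apply_ite Finset.card, Finset.card_range, Finset.card_singleton]
  rw [← Finset.prod_compl_mul_prod S, Finset.prod_congr rfl fun v hv => if_neg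
    (Finset.mem_compl.1 hv), Finset.prod_congr (s₁ := S) rfl fun v hv => if_pos hv]
  simp

lemma card_filter_agreeSet_eq_mul_le {n φ : V → ℕ} (hφ : φ ∈ box n Finset.univ) (S : Finset V) :
    ((box n Finset.univ).filter fun ψ => ({v | φ v = ψ v} : Finset V) = S).card * ∏ v ∈ S, n v ≤
      ∏ v, n v := by
  rw [← card_filter_agree_mul hφ S]
  refine Nat.mul_le_mul_right _ (Finset.card_le_card ?_)
  exact Finset.monotone_filter_right _ fun ψ _ hψ v hv => by simpa [← hψ] using hv

end Box

section TransversalCopies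

variable {V : Type*} [Encodable V]

/-- The blow-up of `V` has the vertex set `V × ℕ`, encoded in `ℕ`. A map `φ : V → ℕ` stands for the
transversal copy of `V` in it formed by the vertices `(v, φ v)`. -/
def copyVertex (φ : V → ℕ) (v : V) : ℕ :=
  Nat.pair (Encodable.encode v) (φ v)

/-- The pair corresponding to the pair `e` of vertices in the transversal copy `φ`. -/
def copyEdge (φ : V → ℕ) : Sym2 V → Sym2 ℕ :=
  Sym2.map (copyVertex φ)

lemma copyVertex_inj {φ ψ : V → ℕ} {v w : V} :
    copyVertex φ v = copyVertex ψ w ↔ v = w ∧ φ v = ψ w := by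
  rw [copyVertex, copyVertex, Nat.pair_eq_pair, Encodable.encode_inj]

lemma copyVertex_injective (φ : V → ℕ) : Function.Injective (copyVertex φ) :=
  fun _ _ h => (copyVertex_inj.1 h).1

lemma copyEdge_inj {φ ψ : V → ℕ} {e e' : Sym2 V} :
    copyEdge φ e = copyEdge ψ e' ↔ e = e' ∧ ∀ v ∈ e, φ v = ψ v := by
  constructor
  · intro h
    have hunpair (φ : V → ℕ) (e : Sym2 V) :
        (copyEdge φ e).map (fun k => k.unpair.1) = e.map Encodable.encode := by
      simp [copyEdge, Sym2.map_map, copyVertex]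
    obtain rfl : e = e' := Sym2.map.injective Encodable.encode_injective <| by
      rw [← hunpair φ, h, hunpair]
    refine ⟨rfl, fun v hv => ?_⟩
    have hmem : copyVertex φ v ∈ copyEdge ψ e := h ▸ Sym2.mem_map.2 ⟨v, hv, rfl⟩
    obtain ⟨w, -, hw⟩ := Sym2.mem_map.1 hmem
    obtain ⟨rfl, hψ⟩ := copyVertex_inj.1 hw
    exact hψ.symm
  · rintro ⟨rfl, hagree⟩
    exact Sym2.map_congr fun v hv => copyVertex_inj.2 ⟨rfl, hagree v hv⟩

lemma copyEdge_injective (φ : V → ℕ) : Function.Injective (copyEdge φ) :=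
  fun _ _ h => (copyEdge_inj.1 h).1

/-- The event that all the pairs in `F` are successful in the transversal copy `φ`. -/
def copyEvent (φ : V → ℕ) (F : Finset (Sym2 V)) : Set (Sym2 ℕ → Bool) :=
  {ω | ∀ e ∈ F, ω (copyEdge φ e) = true}

lemma copyEvent_eq_forall_image (φ : V → ℕ) (F : Finset (Sym2 V)) :
    copyEvent φ F = {ω | ∀ d ∈ F.image (copyEdge φ), ω d = true} := by
  simp only [copyEvent, Finset.forall_mem_image]

lemma measurableSet_copyEvent (φ : V → ℕ) (F : Finset (Sym2 V)) :
    MeasurableSet (copyEvent φ F) :=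
  copyEvent_eq_forall_image φ F ▸ measurableSet_forall_true _

lemma answerMeasure_real_copyEvent (p : I) (φ : V → ℕ) (F : Finset (Sym2 V)) :
    (answerMeasure (Sym2 ℕ) p).real (copyEvent φ F) = (p : ℝ) ^ F.card := by
  rw [copyEvent_eq_forall_image, answerMeasure_real_forall_true,
    Finset.card_image_of_injective _ (copyEdge_injective φ)]

end TransversalCopies

section BlowUp

variable {V : Type*} {H : SimpleGraph V} {n : V → ℕ} {p : I}

/-- The edges of `H` with both endpoints in `S`. -/
noncomputable def edgesIn (H : SimpleGraph V) (S : Finset V) : Finset (Sym2 V) :=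
  S.sym2.filter (· ∈ H.edgeSet)

lemma mem_edgesIn {S : Finset V} {e : Sym2 V} :
    e ∈ edgesIn H S ↔ (∀ v ∈ e, v ∈ S) ∧ e ∈ H.edgeSet := by
  rw [edgesIn, Finset.mem_filter, Finset.mem_sym2_iff]

/-- The expected number of copies of `H[S]` in the random blow-up of `H` with parts of sizes `n`. -/
noncomputable def expectedCopies (H : SimpleGraph V) (n : V → ℕ) (p : I) (S : Finset V) : ℝ :=
  (∏ v ∈ S, (n v : ℝ)) * (p : ℝ) ^ (edgesIn H S).card

lemma prod_mul_rpow_neg {ι : Type*} (S : Finset ι) (c : ℝ) {x : ℝ} (hx : 0 < x) (a : ι → ℝ) :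
    ∏ i ∈ S, (c * x ^ (-a i)) = c ^ S.card * x ^ (-∑ i ∈ S, a i) := by
  rw [Finset.prod_mul_distrib, Finset.prod_const, ← Real.rpow_sum_of_pos hx,
    Finset.sum_neg_distrib]

lemma le_expectedCopies (hp : 0 < p) {a : V → ℝ} {c : ℝ} (hc : 1 ≤ c)
    (hn : ∀ v, c * (p : ℝ) ^ (-a v) ≤ n v) {S : Finset V} (hS : S.Nonempty)
    (hdensity : ((edgesIn H S).card : ℝ) ≤ ∑ v ∈ S, a v) : c ≤ expectedCopies H n p S := by
  have hp' : (0 : ℝ) < p := hp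
  calc c ≤ c ^ S.card := le_self_pow₀ hc hS.card_pos.ne'
    _ ≤ c ^ S.card * (p : ℝ) ^ (-∑ v ∈ S, a v + (edgesIn H S).card) :=
        le_mul_of_one_le_right (by positivity)
          (Real.one_le_rpow_of_pos_of_le_one_of_nonpos hp' p.2.2 (by linarith))
    _ = (∏ v ∈ S, (c * (p : ℝ) ^ (-a v))) * (p : ℝ) ^ (edgesIn H S).card := by
        rw [prod_mul_rpow_neg S c hp', Real.rpow_add hp', Real.rpow_natCast, mul_assoc]
    _ ≤ expectedCopies H n p S :=
        mul_le_mul_of_nonneg_right (Finset.prod_le_prod (fun v _ => by positivity)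
          fun v _ => hn v) (by positivity)

variable [Fintype V]

lemma sum_inv_expectedCopies_le {c : ℝ} (hc : 0 < c)
    (h : ∀ S : Finset V, S.Nonempty → c ≤ expectedCopies H n p S) :
    ∑ S ∈ Finset.univ.erase ∅, (expectedCopies H n p S)⁻¹ ≤ 2 ^ Fintype.card V / c := by
  have hcount : ((Finset.univ.erase (∅ : Finset V)).card : ℝ) ≤ 2 ^ Fintype.card V := by
    exact_mod_cast Finset.card_erase_le.trans_eq (by simp)
  calc _ ≤ (Finset.univ.erase (∅ : Finset V)).card • c⁻¹ :=
        Finset.sum_le_card_nsmul _ _ _ fun S hS => inv_anti₀ hc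
          (h S (Finset.nonempty_iff_ne_empty.2 (Finset.ne_of_mem_erase hS)))
    _ ≤ 2 ^ Fintype.card V / c := by rw [nsmul_eq_mul, div_eq_mul_inv]; gcongr

lemma mem_edgesIn_univ {e : Sym2 V} : e ∈ edgesIn H Finset.univ ↔ e ∈ H.edgeSet :=
  mem_edgesIn.trans (and_iff_right fun v _ => Finset.mem_univ v)

variable [Encodable V]

lemma image_copyEdge_inter_image_copyEdge (H : SimpleGraph V) (φ ψ : V → ℕ) :
    (edgesIn H Finset.univ).image (copyEdge φ) ∩ (edgesIn H Finset.univ).image (copyEdge ψ) =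
      (edgesIn H {v | φ v = ψ v}).image (copyEdge φ) := by
  ext d
  simp only [Finset.mem_inter, Finset.mem_image, mem_edgesIn_univ]
  simp only [mem_edgesIn, Finset.mem_filter_univ]
  constructor
  · rintro ⟨⟨e, he, rfl⟩, e', -, heq⟩
    obtain ⟨rfl, hagree⟩ := copyEdge_inj.1 heq.symm
    exact ⟨e, ⟨hagree, he⟩, rfl⟩
  · rintro ⟨e, ⟨hagree, he⟩, rfl⟩
    exact ⟨⟨e, he, rfl⟩, e, he, (copyEdge_inj.2 ⟨rfl, hagree⟩).symm⟩

lemma answerMeasure_real_copyEvent_inter_mul (H : SimpleGraph V) (p : I) (φ ψ : V → ℕ) :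
    (answerMeasure (Sym2 ℕ) p).real
        (copyEvent φ (edgesIn H Finset.univ) ∩ copyEvent ψ (edgesIn H Finset.univ)) *
      (p : ℝ) ^ (edgesIn H {v | φ v = ψ v}).card =
    ((p : ℝ) ^ (edgesIn H Finset.univ).card) ^ 2 := by
  have hunion : copyEvent φ (edgesIn H Finset.univ) ∩ copyEvent ψ (edgesIn H Finset.univ) =
      {ω | ∀ d ∈ (edgesIn H Finset.univ).image (copyEdge φ) ∪
        (edgesIn H Finset.univ).image (copyEdge ψ), ω d = true} := by
    simp only [copyEvent_eq_forall_image, Finset.forall_mem_union, Set.ofPred_and]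
  have hcard := Finset.card_union_add_card_inter ((edgesIn H Finset.univ).image (copyEdge φ))
    ((edgesIn H Finset.univ).image (copyEdge ψ))
  simp only [image_copyEdge_inter_image_copyEdge,
    Finset.card_image_of_injective _ (copyEdge_injective _)] at hcard
  rw [hunion, answerMeasure_real_forall_true, ← pow_add, hcard, ← two_mul, mul_comm, pow_mul]

lemma sum_answerMeasure_real_copyEvent_inter_le (hn : ∀ v, 0 < n v) (hp : 0 < p) {φ : V → ℕ}
    (hφ : φ ∈ box n Finset.univ) :
    ∑ ψ ∈ box n Finset.univ, (answerMeasure (Sym2 ℕ) p).real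
        (copyEvent φ (edgesIn H Finset.univ) ∩ copyEvent ψ (edgesIn H Finset.univ)) ≤
      (∏ v, (n v : ℝ)) * ((p : ℝ) ^ (edgesIn H Finset.univ).card) ^ 2 *
        ∑ S, (expectedCopies H n p S)⁻¹ := by
  have hp' : (0 : ℝ) < p := hp
  have hprod (S : Finset V) : (0 : ℝ) < ∏ v ∈ S, (n v : ℝ) :=
    Finset.prod_pos fun v _ => Nat.cast_pos.2 (hn v)
  rw [← Finset.sum_fiberwise _ fun ψ : V → ℕ => ({v | φ v = ψ v} : Finset V), Finset.mul_sum]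
  refine Finset.sum_le_sum fun S _ => ?_
  have hterm : ∀ ψ ∈ (box n Finset.univ).filter fun ψ => ({v | φ v = ψ v} : Finset V) = S,
      (answerMeasure (Sym2 ℕ) p).real
        (copyEvent φ (edgesIn H Finset.univ) ∩ copyEvent ψ (edgesIn H Finset.univ)) =
      ((p : ℝ) ^ (edgesIn H Finset.univ).card) ^ 2 / (p : ℝ) ^ (edgesIn H S).card := by
    intro ψ hψ
    rw [eq_div_iff (pow_pos hp' _).ne', ← (Finset.mem_filter.1 hψ).2,
      answerMeasure_real_copyEvent_inter_mul]
  have hcard : (((box n Finset.univ).filter fun ψ => ({v | φ v = ψ v} : Finset V) = S).card : ℝ) ≤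
      (∏ v, (n v : ℝ)) / ∏ v ∈ S, (n v : ℝ) := by
    rw [le_div_iff₀ (hprod S)]
    exact_mod_cast card_filter_agreeSet_eq_mul_le hφ S
  rw [Finset.sum_congr rfl hterm, Finset.sum_const, nsmul_eq_mul]
  calc _ ≤ (∏ v, (n v : ℝ)) / (∏ v ∈ S, (n v : ℝ)) *
        (((p : ℝ) ^ (edgesIn H Finset.univ).card) ^ 2 / (p : ℝ) ^ (edgesIn H S).card) :=
        mul_le_mul_of_nonneg_right hcard (by positivity)
    _ = _ := by rw [expectedCopies, div_mul_div_comm, div_eq_mul_inv]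

lemma answerMeasure_real_no_copy_le (hn : ∀ v, 0 < n v) (hp : 0 < p) :
    (answerMeasure (Sym2 ℕ) p).real
        {ω | ∀ φ ∈ box n Finset.univ, ω ∉ copyEvent φ (edgesIn H Finset.univ)} ≤
      ∑ S ∈ Finset.univ.erase ∅, (expectedCopies H n p S)⁻¹ := by
  have hmean : ∑ φ ∈ box n Finset.univ, (answerMeasure (Sym2 ℕ) p).real
      (copyEvent φ (edgesIn H Finset.univ)) = expectedCopies H n p Finset.univ := by
    simp only [answerMeasure_real_copyEvent, Finset.sum_const, nsmul_eq_mul, card_box,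
      expectedCopies, Nat.cast_prod]
  have hpos : 0 < expectedCopies H n p Finset.univ :=
    mul_pos (Finset.prod_pos fun v _ => Nat.cast_pos.2 (hn v)) (pow_pos hp _)
  have hempty : (expectedCopies H n p ∅)⁻¹ = 1 := by simp [expectedCopies, edgesIn]
  have hpairs := Finset.sum_le_sum fun φ (hφ : φ ∈ box n Finset.univ) =>
    sum_answerMeasure_real_copyEvent_inter_le (H := H) hn hp hφ
  refine (measureReal_forall_notMem_le (fun φ _ => measurableSet_copyEvent φ _)
    (hmean ▸ hpos)).trans ?_
  rw [hmean, sub_le_iff_le_add, ← hempty, Finset.sum_erase_add _ _ (Finset.mem_univ _),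
    div_le_iff₀ (pow_pos hpos 2)]
  refine hpairs.trans_eq ?_
  rw [Finset.sum_const, nsmul_eq_mul, card_box, Nat.cast_prod, expectedCopies]
  ring

end BlowUp

/-- A plan for the order in which the edges of `H` are looked for in its blow-up. The pair
corresponding to the edge `e` in a transversal copy may be queried once all the other edges of
`H[support e]` have been found in this copy; `rank` ensures that this is not circular. -/
structure ExposureScheme {V : Type*} (H : SimpleGraph V) where
  support : Sym2 V → Finset V
  rank : Sym2 V → ℕ
  mem_support : ∀ e ∈ H.edgeSet, ∀ v ∈ e, v ∈ support e
  rank_lt : ∀ e ∈ H.edgeSet, ∀ e' ∈ edgesIn H (support e), e' ≠ e → rank e' < rank e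

namespace ExposureScheme

variable {V : Type*} {H : SimpleGraph V} (P : ExposureScheme H) {n : V → ℕ}

/-- The edges which have to be found before `e` is looked for. -/
noncomputable def prereqs (e : Sym2 V) : Finset (Sym2 V) :=
  (edgesIn H (P.support e)).erase e

lemma card_prereqs {e : Sym2 V} (he : e ∈ H.edgeSet) :
    (P.prereqs e).card = (edgesIn H (P.support e)).card - 1 :=
  Finset.card_erase_of_mem (mem_edgesIn.2 ⟨P.mem_support e he, he⟩)

section Fintype

variable [Fintype V]

/-- The expected number of pairs which may be queried, counted with multiplicity. -/
noncomputable def expectedQueries (n : V → ℕ) (p : I) : ℝ :=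
  ∑ e ∈ edgesIn H Finset.univ, (∏ v ∈ P.support e, (n v : ℝ)) * (p : ℝ) ^ (P.prereqs e).card

lemma expectedQueries_le {p : I} (hp : 0 < p) {a : V → ℝ} {b c : ℝ} (hc : 1 ≤ c)
    (hn : ∀ v, (n v : ℝ) ≤ c * (p : ℝ) ^ (-a v))
    (hcost : ∀ e ∈ H.edgeSet, ∑ v ∈ P.support e, a v ≤ b + (P.prereqs e).card) :
    P.expectedQueries n p ≤
      (edgesIn H Finset.univ).card * c ^ Fintype.card V * (p : ℝ) ^ (-b) := by
  have hp' : (0 : ℝ) < p := hp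
  rw [mul_assoc, ← nsmul_eq_mul]
  refine Finset.sum_le_card_nsmul _ _ _ fun e he => ?_
  have hexp := hcost e (mem_edgesIn_univ.1 he)
  calc (∏ v ∈ P.support e, (n v : ℝ)) * (p : ℝ) ^ (P.prereqs e).card
      ≤ (∏ v ∈ P.support e, (c * (p : ℝ) ^ (-a v))) * (p : ℝ) ^ (P.prereqs e).card :=
        mul_le_mul_of_nonneg_right (Finset.prod_le_prod (fun v _ => by positivity)
          fun v _ => hn v) (by positivity)
    _ = c ^ (P.support e).card *
        (p : ℝ) ^ (-∑ v ∈ P.support e, a v + (P.prereqs e).card) := by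
        rw [prod_mul_rpow_neg _ c hp', Real.rpow_add hp', Real.rpow_natCast, mul_assoc]
    _ ≤ c ^ Fintype.card V * (p : ℝ) ^ (-b) :=
        mul_le_mul (pow_le_pow_right₀ hc (Finset.card_le_univ _))
          (Real.rpow_le_rpow_of_exponent_ge hp' p.2.2 (by linarith)) (by positivity)
          (by positivity)

section Rule

variable [Encodable V]

/-- The pairs of the blow-up which may be queried if the pairs in `X` have been found. -/
def rule (n : V → ℕ) (X : Set (Sym2 ℕ)) : Set (Sym2 ℕ) :=
  {d | ∃ e ∈ H.edgeSet, ∃ φ ∈ box n (P.support e), copyEdge φ e = d ∧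
    ∀ e' ∈ P.prereqs e, copyEdge φ e' ∈ X}

lemma rule_mono (n : V → ℕ) : Monotone (P.rule n) := by
  rintro X Y hXY d ⟨e, he, φ, hφ, hd, hX⟩
  exact ⟨e, he, φ, hφ, hd, fun e' he' => hXY (hX e' he')⟩

lemma not_isDiag_of_mem_rule (X : Set (Sym2 ℕ)) : ∀ d ∈ P.rule n X, ¬ d.IsDiag := by
  rintro _ ⟨e, he, φ, -, rfl, -⟩
  rw [copyEdge, Sym2.isDiag_map (copyVertex_injective φ)]
  exact H.not_isDiag_of_mem_edgeSet he

lemma copyEdge_mem_of_rule_subset {A : Set (Sym2 ℕ)} {ω : Sym2 ℕ → Bool}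
    (hA : P.rule n {d ∈ A | ω d = true} ⊆ A) {φ : V → ℕ} (hφ : φ ∈ box n Finset.univ)
    (hω : ω ∈ copyEvent φ (edgesIn H Finset.univ)) {e : Sym2 V} (he : e ∈ H.edgeSet) :
    copyEdge φ e ∈ A := by
  induction hr : P.rank e using Nat.strong_induction_on generalizing e with
  | _ r ih =>
    subst hr
    set ψ : V → ℕ := fun v => if v ∈ P.support e then φ v else 0
    have hψ : ψ ∈ box n (P.support e) := by
      simp only [box, Fintype.mem_piFinset, Finset.mem_univ, if_true] at hφ ⊢
      intro v
      by_cases hv : v ∈ P.support e <;> simp [ψ, hv, Finset.mem_range.1 (hφ v)]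
    have hagree {e' : Sym2 V} (he' : ∀ v ∈ e', v ∈ P.support e) :
        copyEdge ψ e' = copyEdge φ e' :=
      copyEdge_inj.2 ⟨rfl, fun v hv => if_pos (he' v hv)⟩
    rw [← hagree (P.mem_support e he)]
    refine hA ⟨e, he, ψ, hψ, rfl, fun e' he' => ?_⟩
    obtain ⟨hne, hmem⟩ := Finset.mem_erase.1 he'
    have hedge := (mem_edgesIn.1 hmem).2
    rw [hagree (mem_edgesIn.1 hmem).1]
    exact ⟨ih _ (P.rank_lt e he e' hmem hne) hedge rfl,
      hω e' (mem_edgesIn_univ.2 hedge)⟩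

lemma containsCopy_of_rule_subset {B : List Bool → Sym2 ℕ} {ω : Sym2 ℕ → Bool} {N : ℕ}
    {A : Set (Sym2 ℕ)} (hAB : A ⊆ queries B ω '' Set.Iio N)
    (hA : P.rule n {d ∈ A | ω d = true} ⊆ A) {φ : V → ℕ} (hφ : φ ∈ box n Finset.univ)
    (hω : ω ∈ copyEvent φ (edgesIn H Finset.univ)) :
    ContainsCopy H (queries B ω) (ω ∘ queries B ω) N := by
  refine ⟨copyVertex φ, copyVertex_injective φ, fun u v huv => ?_⟩
  have hedge : s(u, v) ∈ H.edgeSet := huv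
  obtain ⟨t, ht, hquery⟩ := hAB (P.copyEdge_mem_of_rule_subset hA hφ hω hedge)
  refine ⟨t, ht, hquery, ?_⟩
  rw [Function.comp_apply, hquery]
  exact hω _ (mem_edgesIn_univ.2 hedge)

/-- The edges of `H` paired with the transversal copies of their supports. -/
noncomputable def attempts (n : V → ℕ) : Finset (Σ _ : Sym2 V, V → ℕ) :=
  (edgesIn H Finset.univ).sigma fun e => box n (P.support e)

lemma encard_rule_le (n : V → ℕ) (ω : Sym2 ℕ → Bool) :
    (P.rule n {d | ω d = true}).encard ≤
      ((P.attempts n).filter fun x => ω ∈ copyEvent x.2 (P.prereqs x.1)).card := by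
  rw [← Set.encard_coe_eq_coe_finsetCard]
  refine (Set.encard_le_encard ?_).trans (Set.encard_image_le (fun x => copyEdge x.2 x.1) _)
  rintro _ ⟨e, he, φ, hφ, rfl, hX⟩
  refine ⟨⟨e, φ⟩, ?_, rfl⟩
  exact Finset.mem_filter.2 ⟨Finset.mem_sigma.2 ⟨mem_edgesIn_univ.2 he, hφ⟩, hX⟩

lemma sum_attempts_real_copyEvent (n : V → ℕ) (p : I) :
    ∑ x ∈ P.attempts n, (answerMeasure (Sym2 ℕ) p).real (copyEvent x.2 (P.prereqs x.1)) =
      P.expectedQueries n p := by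
  simp only [attempts, Finset.sum_sigma, answerMeasure_real_copyEvent, Finset.sum_const,
    nsmul_eq_mul, card_box, Nat.cast_prod, expectedQueries]

lemma answerMeasure_real_lt_encard_rule_le (n : V → ℕ) (p : I) {N : ℕ} (hN : 0 < N) :
    (answerMeasure (Sym2 ℕ) p).real {ω | N < (P.rule n {d | ω d = true}).encard} ≤
      P.expectedQueries n p / N := by
  rw [← sum_attempts_real_copyEvent]
  refine (measureReal_mono (fun ω hω => ?_) (measure_ne_top _ _)).trans
    (measureReal_le_sum_indicator_one_le (fun x _ => measurableSet_copyEvent x.2 _)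
      (Nat.cast_pos.2 hN))
  have hcard : N ≤ ((P.attempts n).filter fun x => ω ∈ copyEvent x.2 (P.prereqs x.1)).card :=
    Nat.cast_le.1 (hω.le.trans (P.encard_rule_le n ω))
  simpa [Set.indicator_apply, Finset.sum_boole] using hcard

end Rule

theorem fQuery_le {p : I} (hp : 0 < p) (hn : ∀ v, 0 < n v) {N : ℕ} (hN : 0 < N)
    (hcopies : ∑ S ∈ Finset.univ.erase ∅, (expectedCopies H n p S)⁻¹ ≤ 1 / 4)
    (hqueries : 4 * P.expectedQueries n p ≤ N) : fQuery H p ≤ N := by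
  let := Fintype.toEncodable V
  obtain ⟨B, hB, hgreedy⟩ := exists_greedy_builder (P.rule_mono n) P.not_isDiag_of_mem_rule
  set μ := answerMeasure (Sym2 ℕ) p
  set success : Set (Sym2 ℕ → Bool) :=
    {ω | ContainsCopy H (queries B ω) (ω ∘ queries B ω) N}
  set noCopy : Set (Sym2 ℕ → Bool) :=
    {ω | ∀ φ ∈ box n Finset.univ, ω ∉ copyEvent φ (edgesIn H Finset.univ)}
  set overrun : Set (Sym2 ℕ → Bool) := {ω | N < (P.rule n {d | ω d = true}).encard}
  have hnoCopy : μ.real noCopy ≤ 1 / 4 := (answerMeasure_real_no_copy_le hn hp).trans hcopies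
  have hoverrun : μ.real overrun ≤ 1 / 4 := by
    refine (P.answerMeasure_real_lt_encard_rule_le n p hN).trans ?_
    rw [div_le_iff₀ (Nat.cast_pos.2 hN)]
    linarith
  have hcover : Set.univ ⊆ success ∪ (noCopy ∪ overrun) := by
    intro ω _
    by_contra! hω
    simp only [Set.mem_union, not_or] at hω
    obtain ⟨hfail, hcopy, hrun⟩ := hω
    simp only [noCopy, Set.mem_ofPred_eq, not_forall, not_not] at hcopy
    obtain ⟨φ, hφ, hcopy⟩ := hcopy
    obtain ⟨A, hAsub, hA⟩ := hgreedy ω N (not_lt.1 hrun)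
    exact hfail (P.containsCopy_of_rule_subset hAsub hA hφ hcopy)
  have htotal : 1 ≤ μ.real success + (μ.real noCopy + μ.real overrun) := by
    rw [← probReal_univ (μ := μ)]
    exact (measureReal_mono hcover).trans ((measureReal_union_le _ _).trans
      (add_le_add_right (measureReal_union_le _ _) _))
  have hsuccess := answerMeasure_real_containsCopy_le_queryProb (H := H) hB p N
  exact Nat.sInf_le ⟨B, hB, by linarith⟩

end Fintype

theorem exists_fQuery_le_mul_rpow [Finite V] {a : V → ℝ} {b : ℝ} (hb : 0 ≤ b)
    (hdensity : ∀ S, ((edgesIn H S).card : ℝ) ≤ ∑ v ∈ S, a v)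
    (hcost : ∀ e ∈ H.edgeSet, ∑ v ∈ P.support e, a v ≤ b + (P.prereqs e).card) :
    ∃ C : ℝ, 0 < C ∧ ∀ p : ℝ, p ∈ Set.Ioo (0 : ℝ) 1 → (fQuery H p : ℝ) ≤ C * p ^ (-b) := by
  have := Fintype.ofFinite V
  set c : ℝ := 2 ^ (Fintype.card V + 2)
  have hc : 1 ≤ c := one_le_pow₀ one_le_two
  set D : ℝ := (edgesIn H Finset.univ).card * (2 * c) ^ Fintype.card V
  refine ⟨2 * (4 * D + 1), by positivity, fun p hp => ?_⟩
  lift p to I using ⟨hp.1.le, hp.2.le⟩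
  have hp0 : (0 : ℝ) < p := hp.1
  have hrpow {x : ℝ} (hx : 0 ≤ x) : 1 ≤ (p : ℝ) ^ (-x) :=
    Real.one_le_rpow_of_pos_of_le_one_of_nonpos hp0 p.2.2 (neg_nonpos.2 hx)
  have ha (v : V) : 0 ≤ a v := by
    simpa using (Nat.cast_nonneg _).trans (hdensity {v})
  have hsize (v : V) : 1 ≤ c * (p : ℝ) ^ (-a v) :=
    one_le_mul_of_one_le_of_one_le hc (hrpow (ha v))
  set n : V → ℕ := fun v => ⌈c * (p : ℝ) ^ (-a v)⌉₊
  set N : ℕ := ⌈(4 * D + 1) * (p : ℝ) ^ (-b)⌉₊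
  have hN : 1 ≤ (4 * D + 1) * (p : ℝ) ^ (-b) :=
    one_le_mul_of_one_le_of_one_le (le_add_of_nonneg_left (by positivity)) (hrpow hb)
  have hcopies : ∑ S ∈ Finset.univ.erase ∅, (expectedCopies H n p S)⁻¹ ≤ 1 / 4 := by
    refine (sum_inv_expectedCopies_le (by positivity) fun S hS =>
      le_expectedCopies hp.1 hc (fun v => Nat.le_ceil _) hS (hdensity S)).trans_eq ?_
    simp only [c, pow_add]
    field_simp
    norm_num
  have hqueries : 4 * P.expectedQueries n p ≤ N := by
    have hbound := P.expectedQueries_le (b := b) (c := 2 * c) (n := n) hp.1 (by linarith)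
      (fun v => (Nat.ceil_le_two_mul (by linarith [hsize v])).trans_eq (mul_assoc _ _ _).symm) hcost
    linarith [Nat.le_ceil ((4 * D + 1) * (p : ℝ) ^ (-b)), hrpow hb]
  have hfQuery : fQuery H p ≤ N := P.fQuery_le hp.1
    (fun v => Nat.ceil_pos.2 (by linarith [hsize v])) (Nat.ceil_pos.2 (by linarith))
    hcopies hqueries
  calc (fQuery H p : ℝ) ≤ N := Nat.cast_le.2 hfQuery
    _ ≤ 2 * ((4 * D + 1) * (p : ℝ) ^ (-b)) := Nat.ceil_le_two_mul (by linarith)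
    _ = _ := (mul_assoc _ _ _).symm

end ExposureScheme

section Cliques

variable {m t q : ℕ} {s b : ℝ}

lemma card_edgesIn_top {V : Type*} (S : Finset V) :
    (edgesIn (⊤ : SimpleGraph V) S).card = S.card.choose 2 := by
  have hoffDiag : edgesIn ⊤ S = S.offDiag.image Sym2.mk.uncurry := by
    ext e
    induction e with
    | _ u v =>
      simp only [mem_edgesIn, Sym2.forall_mem_pair, SimpleGraph.mem_edgeSet, SimpleGraph.top_adj,
        Finset.mem_image, Finset.mem_offDiag, Prod.exists, Function.uncurry_apply_pair]
      constructor
      · exact fun ⟨⟨hu, hv⟩, huv⟩ => ⟨u, v, ⟨hu, hv, huv⟩, rfl⟩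
      · rintro ⟨u', v', ⟨hu, hv, huv⟩, heq⟩
        rcases Sym2.eq_iff.1 heq with ⟨rfl, rfl⟩ | ⟨rfl, rfl⟩
        exacts [⟨⟨hu, hv⟩, huv⟩, ⟨⟨hv, hu⟩, huv.symm⟩]
  rw [hoffDiag, Sym2.card_image_offDiag]

lemma sum_range_card_le_sum_of_monotone {M : Type*} [AddCommMonoid M] [Preorder M]
    [AddLeftMono M] {f : ℕ → M} (hf : Monotone f) (T : Finset ℕ) :
    ∑ k ∈ Finset.range T.card, f k ≤ ∑ k ∈ T, f k := by
  induction T using Finset.induction_on_max with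
  | empty => simp
  | insert k T hk ih =>
    have hkT : k ∉ T := fun h => (hk k h).false
    have hcard : T.card ≤ k := by
      simpa using Finset.card_le_card fun l hl => Finset.mem_range.2 (hk l hl)
    rw [Finset.card_insert_of_notMem hkT, Finset.sum_insert hkT, Finset.sum_range_succ, add_comm]
    exact add_le_add (hf hcard) ih

/-- The scheme for `K m` in which the pair `s(i, j)` with `i < j` is looked for once the vertices
`i` and `j` have been joined to a clique on the first `min i t` vertices. -/
def cliqueScheme (m t : ℕ) : ExposureScheme (K m) where
  support e := {k | k.val < min e.inf.val t ∨ k ∈ e}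
  rank e := min e.inf.val t
  mem_support e _ v hv := by simp [hv]
  rank_lt e _ e' he' hne := by
    obtain ⟨hsupport, hedge⟩ := mem_edgesIn.1 he'
    obtain ⟨u, hu, hue⟩ : ∃ u ∈ e', u ∉ e := by
      by_contra! hsub
      induction e' with
      | _ v w =>
        exact hne ((Sym2.mem_and_mem_iff hedge).1
          ⟨hsub v (Sym2.mem_mk_left v w), hsub w (Sym2.mem_mk_right v w)⟩).symm
    have hult : u.val < min e.inf.val t := by simpa [hue] using hsupport u hu
    have hinf : e'.inf ≤ u := by
      induction e' with
      | _ v w =>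
        rcases Sym2.mem_iff.1 hu with rfl | rfl
        exacts [inf_le_left, inf_le_right]
    exact (min_le_left _ _).trans_lt (lt_of_le_of_lt hinf hult)

lemma map_val_support_cliqueScheme {i j : Fin m} (hij : i < j) :
    ((cliqueScheme m t).support s(i, j)).map Fin.valEmbedding =
      insert i.val (insert j.val (Finset.range (min i.val t))) := by
  ext k
  simp only [cliqueScheme, Sym2.inf_mk, inf_eq_left.2 hij.le, Finset.mem_map,
    Finset.mem_filter_univ, Fin.valEmbedding_apply, Sym2.mem_iff, Finset.mem_insert,
    Finset.mem_range]
  constructor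
  · rintro ⟨k, hk | rfl | rfl, rfl⟩ <;> simp_all
  · rintro (rfl | rfl | hk)
    exacts [⟨i, .inr (.inl rfl), rfl⟩, ⟨j, .inr (.inr rfl), rfl⟩,
      ⟨⟨k, by omega⟩, .inl hk, rfl⟩]

/-- The blow-up of `K m` has about `p ^ (-sizeExponent t s b k)` vertices in its `k`-th part. -/
noncomputable def sizeExponent (t : ℕ) (s b : ℝ) (k : ℕ) : ℝ :=
  if k + 1 < t then k else if k + 1 = t then k + s else b

lemma sizeExponent_monotone (hs : 0 ≤ s) (hsb : s + t ≤ b + 1) :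
    Monotone (sizeExponent t s b) := by
  refine monotone_nat_of_le_succ fun k => ?_
  rw [sizeExponent, sizeExponent]
  rcases lt_trichotomy (k + 2) t with hk | rfl | hk
  · rw [if_pos (by omega), if_pos hk]
    simp
  · rw [if_pos (by omega), if_neg (lt_irrefl _), if_pos rfl]
    push_cast
    linarith
  · rw [if_neg (by omega), if_neg hk.not_gt, if_neg hk.ne']
    split_ifs with hkt
    · rw [← hkt] at hsb
      push_cast at hsb
      linarith
    · exact le_rfl

lemma sizeExponent_le (hs : 0 ≤ s) (hsb : s + t ≤ b + 1) (k : ℕ) :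
    sizeExponent t s b k ≤ b := by
  refine (sizeExponent_monotone hs hsb (Nat.le_add_right k t)).trans_eq ?_
  rw [sizeExponent, if_neg (by omega), if_neg (by omega)]

lemma sum_range_sizeExponent_of_lt {r : ℕ} (hr : r < t) :
    ∑ k ∈ Finset.range r, sizeExponent t s b k = r.choose 2 := by
  induction r with
  | zero => simp
  | succ r ih =>
    rw [Finset.sum_range_succ, ih (by omega), sizeExponent, if_pos hr, Nat.choose_succ_succ' r 1]
    push_cast [Nat.choose_one_right]
    ring

lemma sum_range_add_sizeExponent (ht : 0 < t) (l : ℕ) :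
    ∑ k ∈ Finset.range (t + l), sizeExponent t s b k = t.choose 2 + s + l * b := by
  induction l with
  | zero =>
    obtain ⟨r, rfl⟩ := Nat.exists_eq_add_one.2 ht
    rw [add_zero, Finset.sum_range_succ, sum_range_sizeExponent_of_lt r.lt_succ_self, sizeExponent,
      if_neg (lt_irrefl _), if_pos rfl, Nat.choose_succ_succ' r 1]
    push_cast [Nat.choose_one_right]
    ring
  | succ l ih =>
    rw [← add_assoc, Finset.sum_range_succ, ih, sizeExponent, if_neg (by omega), if_neg (by omega)]
    push_cast
    ring

lemma choose_two_le_sum_range_sizeExponent (ht : 0 < t) (hs : 0 ≤ s)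
    (hq : (q.choose 2 : ℝ) ≤ s + q * (b - t)) {r : ℕ} (hr : r ≤ t + q) :
    (r.choose 2 : ℝ) ≤ ∑ k ∈ Finset.range r, sizeExponent t s b k := by
  rcases lt_or_ge r t with hrt | hrt
  · exact (sum_range_sizeExponent_of_lt hrt).ge
  obtain ⟨l, rfl⟩ := Nat.exists_eq_add_of_le hrt
  have hlq : (l : ℝ) ≤ q := by exact_mod_cast (Nat.add_le_add_iff_left.1 hr)
  have hl : (l.choose 2 : ℝ) ≤ s + l * (b - t) := by
    rcases q.eq_zero_or_pos with rfl | hq0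
    · obtain rfl : l = 0 := by simpa using hlq
      simpa using hs
    rw [Nat.cast_choose_two] at hq ⊢
    refine le_of_mul_le_mul_left ?_ (Nat.cast_pos (α := ℝ).2 hq0)
    nlinarith [mul_nonneg (sub_nonneg.2 hlq) hs, mul_le_mul_of_nonneg_left hq l.cast_nonneg,
      mul_nonneg (sub_nonneg.2 hlq) (mul_nonneg (Nat.cast_nonneg (α := ℝ) q) l.cast_nonneg)]
  rw [sum_range_add_sizeExponent ht, Nat.cast_choose_two]
  rw [Nat.cast_choose_two] at hl ⊢
  push_cast
  linarith

lemma card_edgesIn_K_le_sum_sizeExponent (ht : 0 < t) (hs : 0 ≤ s) (hsb : s + t ≤ b + 1)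
    (hq : (q.choose 2 : ℝ) ≤ s + q * (b - t)) (S : Finset (Fin (t + q))) :
    ((edgesIn (K (t + q)) S).card : ℝ) ≤ ∑ k ∈ S, sizeExponent t s b k := by
  have hcard : S.card ≤ t + q := (Finset.card_le_univ S).trans_eq (Fintype.card_fin _)
  have hsum := sum_range_card_le_sum_of_monotone (sizeExponent_monotone (t := t) hs hsb)
    (S.map Fin.valEmbedding)
  rw [Finset.card_map, Finset.sum_map] at hsum
  rw [card_edgesIn_top]
  exact (choose_two_le_sum_range_sizeExponent ht hs hq hcard).trans hsum

lemma sizeExponent_add_sum_range_le (ht : 0 < t) (hst : s ≤ t - 1) (hbt : s + b ≤ 2 * t) (i : ℕ) :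
    sizeExponent t s b i + ∑ k ∈ Finset.range (min i t), sizeExponent t s b k ≤
      (min i t).choose 2 + 2 * (min i t : ℕ) := by
  rcases lt_or_ge i t with hi | hi
  · rw [min_eq_left hi.le, sum_range_sizeExponent_of_lt hi, sizeExponent]
    split_ifs with hi₁ hi₂
    · linarith [(Nat.cast_nonneg i : (0 : ℝ) ≤ i)]
    · rw [← hi₂] at hst
      push_cast at hst
      linarith
    · omega
  · have hsum := sum_range_add_sizeExponent (s := s) (b := b) ht 0
    rw [min_eq_right hi, sizeExponent, if_neg (by omega), if_neg (by omega)]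
    rw [add_zero] at hsum
    rw [hsum]
    push_cast
    linarith

lemma card_prereqs_cliqueScheme {i j : Fin m} (hij : i < j) :
    ((cliqueScheme m t).prereqs s(i, j)).card =
      (min i.val t).choose 2 + 2 * min i.val t := by
  have hcard : ((cliqueScheme m t).support s(i, j)).card = min i.val t + 2 := by
    rw [← Finset.card_map Fin.valEmbedding, map_val_support_cliqueScheme hij,
      Finset.card_insert_of_notMem, Finset.card_insert_of_notMem, Finset.card_range]
    all_goals grind
  rw [ExposureScheme.card_prereqs _ ((K m).mem_edgeSet.2 hij.ne), card_edgesIn_top, hcard,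
    Nat.choose_succ_succ' _ 1, Nat.choose_succ_succ' _ 1]
  simp only [Nat.reduceAdd, Nat.choose_one_right]
  omega

lemma sum_support_cliqueScheme_le (ht : 0 < t) (hs : 0 ≤ s) (hst : s ≤ t - 1)
    (hbt : s + b ≤ 2 * t) (hsb : s + t ≤ b + 1) {e : Sym2 (Fin m)} (he : e ∈ (K m).edgeSet) :
    ∑ k ∈ (cliqueScheme m t).support e, sizeExponent t s b k ≤
      b + ((cliqueScheme m t).prereqs e).card := by
  induction e with
  | _ i j =>
    wlog hij : i < j generalizing i j
    · rw [Sym2.eq_swap]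
      exact this j i ((K m).adj_symm he) (lt_of_le_of_ne (not_lt.1 hij) ((K m).ne_of_adj he).symm)
    have hsum : ∑ k ∈ (cliqueScheme m t).support s(i, j), sizeExponent t s b k =
        ∑ k ∈ insert i.val (insert j.val (Finset.range (min i.val t))), sizeExponent t s b k := by
      rw [← map_val_support_cliqueScheme hij, Finset.sum_map]
      rfl
    rw [hsum, Finset.sum_insert, Finset.sum_insert, card_prereqs_cliqueScheme hij]
    · rw [Nat.cast_add, Nat.cast_mul, Nat.cast_two]
      linarith [sizeExponent_le (t := t) hs hsb j.val,
        sizeExponent_add_sum_range_le ht hst hbt i.val]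
    all_goals grind

theorem exists_fQuery_K_le (ht : 0 < t) (hs : 0 ≤ s) (hst : s ≤ t - 1)
    (hbt : s + b ≤ 2 * t) (hsb : s + t ≤ b + 1) (hq : (q.choose 2 : ℝ) ≤ s + q * (b - t)) :
    ∃ C : ℝ, 0 < C ∧ ∀ p : ℝ, p ∈ Set.Ioo (0 : ℝ) 1 →
      (fQuery (K (t + q)) p : ℝ) ≤ C * p ^ (-b) :=
  (cliqueScheme (t + q) t).exists_fQuery_le_mul_rpow (by linarith)
    (card_edgesIn_K_le_sum_sizeExponent ht hs hsb hq)
    fun _ he => sum_support_cliqueScheme_le ht hs hst hbt hsb he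

end Cliques

section Residues

variable {m : ℕ}

lemma exists_fQuery_K_le_of_mod_three_eq_zero (hm : 4 ≤ m) (h : m % 3 = 0) :
    ∃ C : ℝ, 0 < C ∧ ∀ p : ℝ, p ∈ Set.Ioo (0 : ℝ) 1 →
      (fQuery (K m) p : ℝ) ≤ C * p ^ (-(2 * (m : ℝ) / 3) + (m : ℝ) / (2 * (m : ℝ) - 3)) := by
  obtain ⟨k, rfl⟩ : ∃ k, m = k + 2 * k := ⟨m / 3, by omega⟩
  have hk : (2 : ℝ) ≤ k := by exact_mod_cast (by omega : 2 ≤ k)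
  have hpos : (0 : ℝ) < 2 * k - 1 := by linarith
  have hs : (k : ℝ) / (2 * k - 1) ≤ 1 := (div_le_one hpos).2 (by linarith)
  have hexponent : -(2 * ((k + 2 * k : ℕ) : ℝ) / 3) +
      ((k + 2 * k : ℕ) : ℝ) / (2 * ((k + 2 * k : ℕ) : ℝ) - 3) = -(2 * k - k / (2 * k - 1)) := by
    have hden : (2 * (k + 2 * k) - 3 : ℝ) = 3 * (2 * k - 1) := by ring
    push_cast
    rw [hden]
    field_simp
    ring
  have hq : ((2 * k).choose 2 : ℝ) =
      k / (2 * k - 1) + (2 * k : ℕ) * (2 * k - k / (2 * k - 1) - k : ℝ) := by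
    rw [Nat.cast_choose_two]
    push_cast
    field_simp
    ring
  rw [hexponent]
  exact exists_fQuery_K_le (by omega) (by positivity) (by linarith) (by linarith) (by linarith)
    hq.le

lemma exists_fQuery_K_le_of_mod_three_eq_one (hm : 4 ≤ m) (h : m % 3 = 1) :
    ∃ C : ℝ, 0 < C ∧ ∀ p : ℝ, p ∈ Set.Ioo (0 : ℝ) 1 →
      (fQuery (K m) p : ℝ) ≤ C * p ^ (-(2 * (m : ℝ) / 3) + 2 / 3) := by
  obtain ⟨k, rfl⟩ : ∃ k, m = k + (2 * k + 1) := ⟨m / 3, by omega⟩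
  have hk : (1 : ℝ) ≤ k := by exact_mod_cast (by omega : 1 ≤ k)
  have hexponent : -(2 * ((k + (2 * k + 1) : ℕ) : ℝ) / 3) + 2 / 3 = -(2 * k) := by
    push_cast
    ring
  have hq : ((2 * k + 1).choose 2 : ℝ) = 0 + (2 * k + 1 : ℕ) * (2 * k - k : ℝ) := by
    rw [Nat.cast_choose_two]
    push_cast
    ring
  rw [hexponent]
  exact exists_fQuery_K_le (by omega) le_rfl (by linarith) (by linarith) (by linarith) hq.le

lemma exists_fQuery_K_le_of_mod_three_eq_two (hm : 4 ≤ m) (h : m % 3 = 2) :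
    ∃ C : ℝ, 0 < C ∧ ∀ p : ℝ, p ∈ Set.Ioo (0 : ℝ) 1 →
      (fQuery (K m) p : ℝ) ≤
        C * p ^ (-(2 * (m : ℝ) / 3) + (2 * (m : ℝ) + 8) / (6 * (m : ℝ) - 3)) := by
  obtain ⟨k, rfl⟩ : ∃ k, m = k + 1 + (2 * k + 1) := ⟨m / 3, by omega⟩
  have hk : (1 : ℝ) ≤ k := by exact_mod_cast (by omega : 1 ≤ k)
  have hinv : 1 / (2 * k + 1 : ℝ) ≤ 1 := (div_le_one (by positivity)).2 (by linarith)
  have hinv' : 0 ≤ 1 / (2 * k + 1 : ℝ) := by positivity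
  have hexponent : -(2 * ((k + 1 + (2 * k + 1) : ℕ) : ℝ) / 3) +
      (2 * ((k + 1 + (2 * k + 1) : ℕ) : ℝ) + 8) / (6 * ((k + 1 + (2 * k + 1) : ℕ) : ℝ) - 3) =
        -(2 * k + 1 - 1 / (2 * k + 1)) := by
    have hden : (6 * (k + 1 + (2 * k + 1)) - 3 : ℝ) = 9 * (2 * k + 1) := by ring
    push_cast
    rw [hden]
    field_simp
    ring
  have hq : ((2 * k + 1).choose 2 : ℝ) =
      1 + (2 * k + 1 : ℕ) * (2 * k + 1 - 1 / (2 * k + 1) - (k + 1 : ℕ) : ℝ) := by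
    rw [Nat.cast_choose_two]
    push_cast
    field_simp
    ring
  rw [hexponent]
  refine exists_fQuery_K_le k.succ_pos zero_le_one ?_ ?_ ?_ hq.le <;> push_cast <;> linarith

end Residues

theorem stmt16 :
    (∃ C : ℝ, 0 < C ∧ ∀ p : ℝ, p ∈ Set.Ioo (0 : ℝ) 1 →
      (fQuery (K 3) p : ℝ) ≤ C * p ^ (-(3 : ℝ) / 2)) ∧
    ∀ m : ℕ, 4 ≤ m → ∃ Cm : ℝ, 0 < Cm ∧ ∀ p : ℝ, p ∈ Set.Ioo (0 : ℝ) 1 →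
      (fQuery (K m) p : ℝ) ≤ Cm * p ^ (-(2 * (m : ℝ) / 3) +
        (if m % 3 = 0 then (m : ℝ) / (2 * (m : ℝ) - 3)
          else if m % 3 = 1 then 2 / 3
          else (2 * (m : ℝ) + 8) / (6 * (m : ℝ) - 3))) := by
  refine ⟨?_, fun m hm => ?_⟩
  · rw [neg_div]
    exact exists_fQuery_K_le (t := 1) (q := 2) (s := 0) one_pos le_rfl (by norm_num) (by norm_num)
      (by norm_num) (by norm_num)
  split_ifs with h₀ h₁
  · exact exists_fQuery_K_le_of_mod_three_eq_zero hm h₀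
  · exact exists_fQuery_K_le_of_mod_three_eq_one hm h₁
  · exact exists_fQuery_K_le_of_mod_three_eq_two hm (by omega)

end OnlineRamseyGame
end

section
/- For every integer m ≥ 3, every nonnegative integer c with c ≤ m/2, and every p ∈ (0,1): f(K_m, p) ≥ (1/4) · p^(−(C(m,2) − c(c−1))/(m−c)), where C(m,2) = m(m−1)/2. -/
open scoped Classical

namespace OnlineRamseyGame

/-!
Fix a strategy, and suppose that it has built a copy of `K_m`, whose edges arrived at certain times.
Some `k = m - c` of these edges, the guides, force all but at most `c (c - 1)` edges `e` of it:
both ends of `e` are met by guides no later than the arrival of `e`. Once the `k` times at which the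
guides are queried have been guessed, Builder can tell during the game which queries are forced; if
the guess is right, at least `E = m (m - 1) / 2 - c (c - 1)` queries are, and all of them succeed.
For a fixed guess this has probability at most `p ^ E`, and a union bound over the `N ^ k` guesses
gives `1 / 2 ≤ N ^ k * p ^ E` for `N = f(K_m, p)`.

For the guides, take a matching of `c` edges that is minimal in the colexicographic order of arrival
times, and the first edge at each of the `m - 2 c` vertices outside it. By minimality an edge with
an end outside the matching is forced. If both `s(x, y)` and `s(x', y')` were unforced for two
edges `s(x, x')` and `s(y, y')` of the matching, exchanging the pairs would give a smaller matching;
so at most half of the `2 c (c - 1)` edges between different edges of the matching are unforced.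
-/

section MinMatching

variable {ι V : Type*} {τ : Sym2 V → ℕ} {g : ι × Bool → V}

/-- The `i`-th edge of a matching. Matchings with edges indexed by `ι` are encoded as injections
`g : ι × Bool → V`, the two ends of the `i`-th edge being `g (i, false)` and `g (i, true)`. -/
def matchEdge (g : ι × Bool → V) (i : ι) : Sym2 V := s(g (i, false), g (i, true))

lemma matchEdge_eq (g : ι × Bool → V) (i : ι) (b : Bool) :
    matchEdge g i = s(g (i, b), g (i, !b)) := by
  cases b
  · rfl
  · exact Sym2.eq_swap

lemma mem_matchEdge (g : ι × Bool → V) (i : ι) (b : Bool) : g (i, b) ∈ matchEdge g i := by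
  simp [matchEdge_eq g i b]

lemma not_isDiag_matchEdge (hg : Function.Injective g) (i : ι) : ¬ (matchEdge g i).IsDiag := by
  simp [matchEdge, hg.eq_iff]

/-- A matching that is minimal among the matchings of its size when edges are ordered by the time
`τ` and matchings by colexicographic order. The weights `2 ^ τ e` encode this order. -/
structure IsMinMatching [Fintype ι] (τ : Sym2 V → ℕ) (g : ι × Bool → V) : Prop where
  injective : Function.Injective g
  cost_le {g' : ι × Bool → V} : Function.Injective g' →
    ∑ i, 2 ^ τ (matchEdge g i) ≤ ∑ i, 2 ^ τ (matchEdge g' i)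

variable [Fintype ι]

lemma exists_isMinMatching [Fintype V] (h : 2 * Fintype.card ι ≤ Fintype.card V)
    (τ : Sym2 V → ℕ) : ∃ g : ι × Bool → V, IsMinMatching τ g := by
  have hcard : Fintype.card (ι × Bool) ≤ Fintype.card V := by
    simpa [mul_comm] using h
  obtain ⟨g₀⟩ := Function.Embedding.nonempty_of_card_le hcard
  obtain ⟨g, hg, hmin⟩ := Set.exists_min_image {g : ι × Bool → V | Function.Injective g}
    (fun g => ∑ i, 2 ^ τ (matchEdge g i)) (Set.toFinite _) ⟨g₀, g₀.injective⟩
  exact ⟨g, hg, fun hg' => hmin _ hg'⟩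

namespace IsMinMatching

lemma sum_le_sum (hg : IsMinMatching τ g) {g' : ι × Bool → V} (hg' : Function.Injective g')
    (I : Finset ι) (h : ∀ k ∉ I, matchEdge g' k = matchEdge g k) :
    ∑ i ∈ I, 2 ^ τ (matchEdge g i) ≤ ∑ i ∈ I, 2 ^ τ (matchEdge g' i) := by
  have hle := hg.cost_le hg'
  have hrest : ∑ i ∈ Iᶜ, 2 ^ τ (matchEdge g' i) = ∑ i ∈ Iᶜ, 2 ^ τ (matchEdge g i) :=
    Finset.sum_congr rfl fun k hk => by rw [h k (Finset.mem_compl.1 hk)]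
  rw [← Finset.sum_add_sum_compl I, ← Finset.sum_add_sum_compl I, hrest] at hle
  exact Nat.le_of_add_le_add_right hle

lemma le_of_notMem_range (hg : IsMinMatching τ g) {u : V} (hu : u ∉ Set.range g) (i : ι)
    (b : Bool) : τ (matchEdge g i) ≤ τ s(u, g (i, b)) := by
  set g' := Function.update g (i, !b) u
  have hg' : Function.Injective g' := by
    intro x y hxy
    simp only [g', Function.update_apply] at hxy
    split_ifs at hxy with hx hy hy
    · rw [hx, hy]
    · exact (hu ⟨y, hxy.symm⟩).elim
    · exact (hu ⟨x, hxy⟩).elim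
    · exact hg.injective hxy
  have hi : matchEdge g' i = s(u, g (i, b)) := by
    simp [matchEdge_eq g' i !b, g']
  have hne : ∀ k ∉ ({i} : Finset ι), matchEdge g' k = matchEdge g k := by
    intro k hk
    have hki : k ≠ i := by simpa using hk
    simp [matchEdge, g', hki]
  have hle := hg.sum_le_sum hg' {i} hne
  rw [Finset.sum_singleton, Finset.sum_singleton, hi] at hle
  exact (Nat.pow_le_pow_iff_right one_lt_two).1 hle

lemma max_le_max (hg : IsMinMatching τ g) (hτ : Set.InjOn τ Sym2.diagSetᶜ) {i j : ι}
    (hij : i ≠ j) (a b : Bool) :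
    max (τ (matchEdge g i)) (τ (matchEdge g j)) ≤
      max (τ s(g (i, a), g (j, b))) (τ s(g (i, !a), g (j, !b))) := by
  set g' := g ∘ Equiv.swap (i, !a) (j, b)
  have hi : matchEdge g' i = s(g (i, a), g (j, b)) := by
    simp [matchEdge_eq g' i a, g', Equiv.swap_apply_def, hij]
  have hj : matchEdge g' j = s(g (i, !a), g (j, !b)) := by
    simp [matchEdge_eq g' j b, g', Equiv.swap_apply_def, hij.symm]
  have hne : ∀ k ∉ ({i, j} : Finset ι), matchEdge g' k = matchEdge g k := by
    intro k hk
    obtain ⟨hki, hkj⟩ : k ≠ i ∧ k ≠ j := by simpa using hk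
    simp [matchEdge, g', Equiv.swap_apply_def, hki, hkj]
  have hle := hg.sum_le_sum (hg.injective.comp (Equiv.injective _)) {i, j} hne
  rw [Finset.sum_pair hij, Finset.sum_pair hij, hi, hj] at hle
  have hτne : τ s(g (i, a), g (j, b)) ≠ τ s(g (i, !a), g (j, !b)) := by
    refine hτ.ne ?_ ?_ ?_ <;> simp [hg.injective.eq_iff, hij]
  rw [← Finset.sum_pair (f := fun n => 2 ^ n) hτne] at hle
  by_contra! hlt
  have hsum : ∑ n ∈ {τ s(g (i, a), g (j, b)), τ s(g (i, !a), g (j, !b))}, 2 ^ n <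
      2 ^ max (τ (matchEdge g i)) (τ (matchEdge g j)) :=
    Nat.geomSum_lt le_rfl (by
      simpa only [Finset.mem_insert, Finset.mem_singleton, forall_eq_or_imp, forall_eq]
        using max_lt_iff.1 hlt)
  have hmax : 2 ^ max (τ (matchEdge g i)) (τ (matchEdge g j)) ≤
      2 ^ τ (matchEdge g i) + 2 ^ τ (matchEdge g j) := by
    rcases max_choice (τ (matchEdge g i)) (τ (matchEdge g j)) with h | h <;> rw [h]
    · exact Nat.le_add_right _ _
    · exact Nat.le_add_left _ _
  exact (hle.trans_lt (hsum.trans_le hmax)).false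

end IsMinMatching

end MinMatching

section CrossEdges

variable {ι : Type*} [Fintype ι]

lemma two_mul_mul_sub_one_add_eq_choose (n : ℕ) : 2 * (n * (n - 1)) + n = (n * 2).choose 2 := by
  rw [Nat.choose_two_right]
  cases n with
  | zero => rfl
  | succ k =>
    refine (Nat.div_eq_of_eq_mul_left two_pos ?_).symm
    rw [Nat.add_sub_cancel, show (k + 1) * 2 - 1 = 2 * k + 1 by omega]
    ring

lemma card_crossEdges_le :
    Finset.card {e : Sym2 (ι × Bool) | ¬ (e.map Prod.fst).IsDiag} ≤
      2 * (Fintype.card ι * (Fintype.card ι - 1)) := by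
  set C : Finset (Sym2 (ι × Bool)) := {e | ¬ (e.map Prod.fst).IsDiag}
  set M : Finset (Sym2 (ι × Bool)) := Finset.univ.image (matchEdge id)
  have hM : M.card = Fintype.card ι := by
    rw [Finset.card_image_of_injective, Finset.card_univ]
    intro i j h
    simpa [matchEdge] using h
  have hCM : Disjoint C M := by
    rw [Finset.disjoint_right, Finset.forall_mem_image]
    simp [C, matchEdge]
  have hsub : C.disjUnion M hCM ⊆ ({e | ¬ e.IsDiag} : Finset (Sym2 (ι × Bool))) := by
    rw [Finset.disjUnion_eq_union, Finset.union_subset_iff, Finset.image_subset_iff]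
    refine ⟨Finset.monotone_filter_right _ fun e _ he hd => he hd.map, fun i _ => ?_⟩
    exact (Finset.mem_filter_univ _).2 (not_isDiag_matchEdge Function.injective_id i)
  have hle := Finset.card_le_card hsub
  rw [Finset.card_disjUnion, hM, ← Fintype.card_subtype (¬ Sym2.IsDiag ·),
    Sym2.card_subtype_not_diag, Fintype.card_prod, Fintype.card_bool,
    ← two_mul_mul_sub_one_add_eq_choose] at hle
  exact Nat.le_of_add_le_add_right hle

lemma card_le_of_flip_notMem (A : Finset (Sym2 (ι × Bool)))
    (hcross : ∀ e ∈ A, ¬ (e.map Prod.fst).IsDiag)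
    (hflip : ∀ e ∈ A, e.map (Prod.map id not) ∉ A) :
    A.card ≤ Fintype.card ι * (Fintype.card ι - 1) := by
  have hinj : Function.Injective (Sym2.map (Prod.map id not : ι × Bool → ι × Bool)) :=
    Sym2.map.injective (Function.injective_id.prodMap Bool.not_injective)
  have hdisj : Disjoint A (A.image (Sym2.map (Prod.map id not))) := by
    simp only [Finset.disjoint_right, Finset.forall_mem_image]
    exact hflip
  have hsub : A ∪ A.image (Sym2.map (Prod.map id not)) ⊆
      ({e | ¬ (e.map Prod.fst).IsDiag} : Finset (Sym2 (ι × Bool))) := by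
    simp only [Finset.union_subset_iff, Finset.image_subset_iff]
    exact ⟨fun e he => (Finset.mem_filter_univ _).2 (hcross e he), fun e he =>
      (Finset.mem_filter_univ _).2 (by rw [Sym2.map_map]; exact hcross e he)⟩
  have hle := (Finset.card_le_card hsub).trans card_crossEdges_le
  rw [Finset.card_union_of_disjoint hdisj, Finset.card_image_of_injective _ hinj] at hle
  omega

end CrossEdges

section Forced

variable {ι V : Type*} {τ : Sym2 V → ℕ} {g : ι × Bool → V} {S : Set (Sym2 V)}

/-- When the edges of a graph arrive at times `τ`, the edges of `S` force `e` if both ends of `e`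
are met by `S` no later than at time `τ e`. In particular the edges of `S` are forced. -/
def IsForced (τ : Sym2 V → ℕ) (S : Set (Sym2 V)) (e : Sym2 V) : Prop :=
  ∀ v ∈ e, ∃ s ∈ S, v ∈ s ∧ τ s ≤ τ e

lemma isForced_of_mem {e : Sym2 V} (he : e ∈ S) : IsForced τ S e :=
  fun _ hv => ⟨e, he, hv, le_rfl⟩

/-- `e` is the edge of the complete graph at `u` that arrives first. -/
structure IsFirstEdge (τ : Sym2 V → ℕ) (u : V) (e : Sym2 V) : Prop where
  not_isDiag : ¬ e.IsDiag
  mem : u ∈ e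
  le {e' : Sym2 V} : ¬ e'.IsDiag → u ∈ e' → τ e ≤ τ e'

lemma exists_isFirstEdge [Finite V] [Nontrivial V] (τ : Sym2 V → ℕ) (u : V) :
    ∃ e, IsFirstEdge τ u e := by
  obtain ⟨v, hv⟩ := exists_ne u
  obtain ⟨e, ⟨hd, hu⟩, hmin⟩ := Set.exists_min_image {e : Sym2 V | ¬ e.IsDiag ∧ u ∈ e} τ
    (Set.toFinite _) ⟨s(u, v), by simpa using hv.symm, Sym2.mem_mk_left u v⟩
  exact ⟨e, hd, hu, fun hd' hu' => hmin _ ⟨hd', hu'⟩⟩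

/-- `S` contains the edges of the matching `g`, and a first edge at each vertex outside `g`. -/
structure IsGuideFor (τ : Sym2 V → ℕ) (g : ι × Bool → V) (S : Set (Sym2 V)) : Prop where
  matchEdge_mem (i : ι) : matchEdge g i ∈ S
  exists_isFirstEdge {u : V} : u ∉ Set.range g → ∃ e ∈ S, IsFirstEdge τ u e

namespace IsGuideFor

lemma isForced_of_max_le (hS : IsGuideFor τ g S) {i j : ι} {a b : Bool}
    (h : max (τ (matchEdge g i)) (τ (matchEdge g j)) ≤ τ s(g (i, a), g (j, b))) :
    IsForced τ S s(g (i, a), g (j, b)) := by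
  obtain ⟨hi, hj⟩ := max_le_iff.1 h
  intro v hv
  rcases Sym2.mem_iff.1 hv with rfl | rfl
  · exact ⟨matchEdge g i, hS.matchEdge_mem i, mem_matchEdge g i a, hi⟩
  · exact ⟨matchEdge g j, hS.matchEdge_mem j, mem_matchEdge g j b, hj⟩

variable [Fintype ι]

lemma isForced_of_notMem_range (hS : IsGuideFor τ g S) (hg : IsMinMatching τ g) {u w : V}
    (huw : u ≠ w) (hu : u ∉ Set.range g) : IsForced τ S s(u, w) := by
  intro v hv
  by_cases hvg : v ∈ Set.range g
  · obtain rfl : v = w := (Sym2.mem_iff.1 hv).resolve_left fun h => hu (h ▸ hvg)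
    obtain ⟨⟨i, b⟩, rfl⟩ := hvg
    exact ⟨matchEdge g i, hS.matchEdge_mem i, mem_matchEdge g i b, hg.le_of_notMem_range hu i b⟩
  · obtain ⟨e, heS, he⟩ := hS.exists_isFirstEdge hvg
    exact ⟨e, heS, he.mem, he.le (by simpa using huw) hv⟩

lemma isForced_or_isForced_flip (hS : IsGuideFor τ g S) (hg : IsMinMatching τ g)
    (hτ : Set.InjOn τ Sym2.diagSetᶜ) {e : Sym2 (ι × Bool)} (he : ¬ (e.map Prod.fst).IsDiag) :
    IsForced τ S (e.map g) ∨ IsForced τ S ((e.map (Prod.map id not)).map g) := by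
  induction e using Sym2.ind with
  | _ x y =>
  obtain ⟨⟨i, a⟩, j, b⟩ := x, y
  have hij : i ≠ j := by simpa using he
  exact (le_max_iff.1 (hg.max_le_max hτ hij a b)).imp hS.isForced_of_max_le hS.isForced_of_max_le

lemma exists_map_eq_of_not_isForced (hS : IsGuideFor τ g S) (hg : IsMinMatching τ g)
    {e : Sym2 V} (hd : ¬ e.IsDiag) (he : ¬ IsForced τ S e) :
    ∃ e' : Sym2 (ι × Bool), ¬ (e'.map Prod.fst).IsDiag ∧ e'.map g = e := by
  induction e using Sym2.ind with
  | _ u w =>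
  have huw : u ≠ w := by simpa using hd
  obtain ⟨⟨i, a⟩, rfl⟩ : u ∈ Set.range g := by
    by_contra hu
    exact he (hS.isForced_of_notMem_range hg huw hu)
  obtain ⟨⟨j, b⟩, rfl⟩ : w ∈ Set.range g := by
    by_contra hw
    rw [Sym2.eq_swap] at he
    exact he (hS.isForced_of_notMem_range hg huw.symm hw)
  refine ⟨s((i, a), (j, b)), fun h => ?_, rfl⟩
  obtain rfl : i = j := h
  obtain rfl : b = !a := Bool.eq_not.2 fun h => huw (by rw [h])
  rw [← matchEdge_eq] at he
  exact he (isForced_of_mem (hS.matchEdge_mem i))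

lemma card_not_isForced_le [Fintype V] (hS : IsGuideFor τ g S) (hg : IsMinMatching τ g)
    (hτ : Set.InjOn τ Sym2.diagSetᶜ) :
    Finset.card {e : Sym2 V | ¬ e.IsDiag ∧ ¬ IsForced τ S e} ≤
      Fintype.card ι * (Fintype.card ι - 1) := by
  set A : Finset (Sym2 (ι × Bool)) :=
    {e | ¬ (e.map Prod.fst).IsDiag ∧ ¬ IsForced τ S (e.map g)}
  have hsub : ({e | ¬ e.IsDiag ∧ ¬ IsForced τ S e} : Finset (Sym2 V)) ⊆ A.image (Sym2.map g) := by
    intro e he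
    obtain ⟨hd, hn⟩ := (Finset.mem_filter_univ _).1 he
    obtain ⟨e', he', rfl⟩ := hS.exists_map_eq_of_not_isForced hg hd hn
    exact Finset.mem_image_of_mem _ (by simp [A, he', hn])
  refine (Finset.card_le_card hsub).trans (Finset.card_image_le.trans ?_)
  refine card_le_of_flip_notMem A (fun e he => ((Finset.mem_filter_univ _).1 he).1) ?_
  intro e he he'
  obtain ⟨hd, hn⟩ := (Finset.mem_filter_univ _).1 he
  exact (hS.isForced_or_isForced_flip hg hτ hd).elim hn ((Finset.mem_filter_univ _).1 he').2

end IsGuideFor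

lemma exists_choose_two_le_card_isForced [Fintype V] [Nontrivial V] {c : ℕ}
    (hc : 2 * c ≤ Fintype.card V) (hτ : Set.InjOn τ Sym2.diagSetᶜ) :
    ∃ σ : Fin (Fintype.card V - c) → Sym2 V, (∀ k, ¬ (σ k).IsDiag) ∧
      (Fintype.card V).choose 2 - c * (c - 1) ≤
        Finset.card {e : Sym2 V | ¬ e.IsDiag ∧ IsForced τ (Set.range σ) e} := by
  obtain ⟨g, hg⟩ := exists_isMinMatching (ι := Fin c) (by simpa using hc) τ
  have hfirst : ∀ u, ∃ e, IsFirstEdge τ u e := exists_isFirstEdge τ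
  choose firstEdge hfirst using hfirst
  let guide : Fin c ⊕ {u // u ∉ Set.range g} → Sym2 V :=
    Sum.elim (matchEdge g) fun u => firstEdge u
  have hcard : Fintype.card (Fin c ⊕ {u // u ∉ Set.range g}) = Fintype.card V - c := by
    have hrange : Fintype.card (Set.range g) = c * 2 := by
      simp [Set.card_range_of_injective hg.injective]
    have hcompl : Fintype.card {u // u ∉ Set.range g} = Fintype.card V - c * 2 := by
      rw [← hrange, ← Fintype.card_subtype_compl]
    rw [Fintype.card_sum, Fintype.card_fin, hcompl]
    omega
  let ε := Fintype.equivFinOfCardEq hcard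
  have hguide : IsGuideFor τ g (Set.range guide) :=
    ⟨fun i => Set.mem_range_self (Sum.inl i),
      fun {u} hu => ⟨guide (.inr ⟨u, hu⟩), Set.mem_range_self _, hfirst u⟩⟩
  have hnd : ∀ j, ¬ (guide j).IsDiag :=
    Sum.forall.2 ⟨not_isDiag_matchEdge hg.injective, fun u => (hfirst u).not_isDiag⟩
  refine ⟨guide ∘ ε.symm, fun k => hnd _, ?_⟩
  rw [ε.symm.surjective.range_comp, Nat.sub_le_iff_le_add, ← Sym2.card_subtype_not_diag,
    Fintype.card_subtype, ← Finset.card_filter_add_card_filter_not (IsForced τ (Set.range guide)),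
    Finset.filter_filter, Finset.filter_filter]
  gcongr
  simpa using hguide.card_not_isForced_le hg hτ

end Forced

section Probability

variable {N : ℕ} {p : ℝ}

lemma extSeq_val (x : Fin N → Bool) (t : Fin N) : extSeq x t = x t := by
  simp [extSeq]

lemma extSeq_cons_zero (b : Bool) (x : Fin N → Bool) :
    extSeq (Fin.cons b x : Fin (N + 1) → Bool) 0 = b :=
  extSeq_val (Fin.cons b x : Fin (N + 1) → Bool) 0

lemma extSeq_cons_succ (b : Bool) (x : Fin N → Bool) (t : ℕ) :
    extSeq (Fin.cons b x : Fin (N + 1) → Bool) (t + 1) = extSeq x t := by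
  simp only [extSeq, Nat.add_lt_add_iff_right]
  split_ifs with h
  · exact Fin.cons_succ (α := fun _ => Bool) b x ⟨t, h⟩
  · rfl

lemma histSeq_zero (y : ℕ → Bool) : histSeq y 0 = [] := rfl

lemma histSeq_cons_succ (b : Bool) (x : Fin N → Bool) (t : ℕ) :
    histSeq (extSeq (Fin.cons b x : Fin (N + 1) → Bool)) (t + 1) = b :: histSeq (extSeq x) t := by
  rw [histSeq, List.range_succ_eq_map, List.map_cons, List.map_map, extSeq_cons_zero]
  exact congrArg _ (List.map_congr_left fun s _ => extSeq_cons_succ b x s)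

lemma sum_prod_histSeq_eq_one (w : List Bool → Bool → ℝ) (hw : ∀ h, w h true + w h false = 1)
    (N : ℕ) : ∑ x : Fin N → Bool, ∏ t : Fin N, w (histSeq (extSeq x) t) (x t) = 1 := by
  induction N generalizing w with
  | zero => simp
  | succ N ih =>
    have hcons (b : Bool) : ∑ x : Fin N → Bool,
        ∏ t : Fin (N + 1), w (histSeq (extSeq (Fin.cons b x : Fin (N + 1) → Bool)) t)
          ((Fin.cons b x : Fin (N + 1) → Bool) t) = w [] b := by
      simp only [Fin.prod_univ_succ, Fin.cons_zero, Fin.cons_succ, Fin.val_zero, Fin.val_succ,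
        histSeq_zero, histSeq_cons_succ, ← Finset.mul_sum]
      rw [ih (fun h => w (b :: h)) fun h => hw (b :: h), mul_one]
    rw [← (Fin.consEquiv fun _ => Bool).sum_comp, Fintype.sum_prod_type, Fintype.sum_bool]
    exact (congrArg₂ _ (hcons true) (hcons false)).trans (hw [])

lemma sum_weight (p : ℝ) (N : ℕ) : ∑ x : Fin N → Bool, weight p x = 1 :=
  sum_prod_histSeq_eq_one (fun _ b => if b then p else 1 - p) (fun _ => by simp) N

lemma weight_nonneg (h0 : 0 ≤ p) (h1 : p ≤ 1) (x : Fin N → Bool) : 0 ≤ weight p x :=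
  Finset.prod_nonneg fun t _ => by split_ifs <;> linarith

/-- A test `R` marks the times `t` at which the history before `t` satisfies `R`. The answers `x`
secure `E` successes for `R` if at least `E` times are marked, and all of them are successes. -/
def Secures (R : List Bool → Prop) (E : ℕ) (x : Fin N → Bool) : Prop :=
  (∀ t : Fin N, R (histSeq (extSeq x) t) → x t = true) ∧
    E ≤ Finset.card {t : Fin N | R (histSeq (extSeq x) t)}

-- The answers securing `E` successes are compared with answers for which success is certain at
-- the marked times: their probability there is larger by a factor of at least `p ^ (-E)`.
lemma sum_weight_secures_le (h0 : 0 ≤ p) (h1 : p ≤ 1) (R : List Bool → Prop) (E : ℕ) :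
    ∑ x : Fin N → Bool with Secures R E x, weight p x ≤ p ^ E := by
  set w : List Bool → Bool → ℝ := fun h b =>
    if R h then (if b then 1 else 0) else if b then p else 1 - p
  have hw_nonneg (h : List Bool) (b : Bool) : 0 ≤ w h b := by
    simp only [w]; split_ifs <;> linarith
  have hprod_nonneg (x : Fin N → Bool) : 0 ≤ ∏ t : Fin N, w (histSeq (extSeq x) t) (x t) :=
    Finset.prod_nonneg fun t _ => hw_nonneg _ _
  have hweight {x : Fin N → Bool} (hx : Secures R E x) :
      weight p x ≤ p ^ E * ∏ t : Fin N, w (histSeq (extSeq x) t) (x t) := by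
    have hfactor (t : Fin N) : (if x t then p else 1 - p) =
        (if R (histSeq (extSeq x) t) then p else 1) * w (histSeq (extSeq x) t) (x t) := by
      by_cases hR : R (histSeq (extSeq x) t)
      · simp [w, hR, hx.1 t hR]
      · simp [w, hR]
    have hpow : ∏ t : Fin N, (if R (histSeq (extSeq x) t) then p else 1) ≤ p ^ E := by
      rw [Finset.prod_ite, Finset.prod_const, Finset.prod_const_one, mul_one]
      exact pow_le_pow_of_le_one h0 h1 hx.2
    rw [weight, Finset.prod_congr rfl fun t _ => hfactor t, Finset.prod_mul_distrib]
    exact mul_le_mul_of_nonneg_right hpow (hprod_nonneg x)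
  calc ∑ x : Fin N → Bool with Secures R E x, weight p x
      ≤ ∑ x : Fin N → Bool with Secures R E x,
          p ^ E * ∏ t : Fin N, w (histSeq (extSeq x) t) (x t) :=
        Finset.sum_le_sum fun x hx => hweight ((Finset.mem_filter_univ _).1 hx)
    _ ≤ ∑ x : Fin N → Bool, p ^ E * ∏ t : Fin N, w (histSeq (extSeq x) t) (x t) :=
        Finset.sum_le_univ_sum_of_nonneg fun x => mul_nonneg (pow_nonneg h0 E) (hprod_nonneg x)
    _ = p ^ E := by
        have hw (h : List Bool) : w h true + w h false = 1 := by by_cases hR : R h <;> simp [w, hR]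
        rw [← Finset.mul_sum, sum_prod_histSeq_eq_one w hw, mul_one]

lemma queryProb_eq_sum_filter {V : Type*} (H : SimpleGraph V) (Q : List Bool → Sym2 ℕ) (N : ℕ)
    (p : ℝ) : queryProb H Q N p = ∑ x : Fin N → Bool with
      ContainsCopy H (fun t => Q (histSeq (extSeq x) t)) (extSeq x) N, weight p x := by
  simp only [queryProb, Finset.sum_filter, mul_ite, mul_one, mul_zero]

lemma queryProb_le_card_mul_pow {V ι : Type*} [Fintype ι] {H : SimpleGraph V}
    {Q : List Bool → Sym2 ℕ} (h0 : 0 ≤ p) (h1 : p ≤ 1) (R : ι → List Bool → Prop) (E : ℕ)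
    (h : ∀ x : Fin N → Bool,
      ContainsCopy H (fun t => Q (histSeq (extSeq x) t)) (extSeq x) N → ∃ i, Secures (R i) E x) :
    queryProb H Q N p ≤ Fintype.card ι * p ^ E := by
  have hnonneg (x : Fin N → Bool) (i : ι) : 0 ≤ if Secures (R i) E x then weight p x else 0 :=
    ite_nonneg (weight_nonneg h0 h1 x) le_rfl
  have hle {x : Fin N → Bool} {i : ι} (hx : Secures (R i) E x) :
      weight p x ≤ ∑ i, if Secures (R i) E x then weight p x else 0 := by
    simpa [hx] using
      Finset.single_le_sum (fun j _ => hnonneg x j) (Finset.mem_univ i)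
  calc queryProb H Q N p
      ≤ ∑ x : Fin N → Bool with ContainsCopy H (fun t => Q (histSeq (extSeq x) t)) (extSeq x) N,
          ∑ i, if Secures (R i) E x then weight p x else 0 := by
        rw [queryProb_eq_sum_filter]
        exact Finset.sum_le_sum fun x hx =>
          (h x (Finset.mem_filter.1 hx).2).elim fun i hi => hle hi
    _ ≤ ∑ x : Fin N → Bool, ∑ i, if Secures (R i) E x then weight p x else 0 :=
        Finset.sum_le_univ_sum_of_nonneg fun x => Finset.sum_nonneg fun i _ => hnonneg x i
    _ = ∑ i, ∑ x : Fin N → Bool with Secures (R i) E x, weight p x := by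
        simp only [Finset.sum_filter]
        exact Finset.sum_comm
    _ ≤ ∑ _i : ι, p ^ E := Finset.sum_le_sum fun i _ => sum_weight_secures_le h0 h1 (R i) E
    _ = Fintype.card ι * p ^ E := by simp

end Probability

section Guessing

variable {V : Type*} {Q : List Bool → Sym2 ℕ} {N : ℕ}

lemma length_histSeq (y : ℕ → Bool) (t : ℕ) : (histSeq y t).length = t := by
  simp [histSeq]

lemma take_histSeq (y : ℕ → Bool) {s t : ℕ} (h : s ≤ t) :
    (histSeq y t).take s = histSeq y s := by
  rw [histSeq, ← List.map_take, List.take_range, min_eq_left h, histSeq]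

lemma ValidBuilder.injective_histSeq_s17 (hQ : ValidBuilder Q) (y : ℕ → Bool) :
    Function.Injective fun t => Q (histSeq y t) := by
  refine Function.Injective.of_lt_imp_ne fun s t hst => ?_
  rw [← take_histSeq y hst.le]
  exact hQ.2 (histSeq y t) s ((length_histSeq y t).symm ▸ hst)

/-- The query following the history `h` is forced by the queries at the times in `T`: both its ends
are met by queries made at such times, the present one included. Unlike `IsForced`, this can be
checked as the game is played, without knowing which copy will be built. -/
def IsForcedQuery (Q : List Bool → Sym2 ℕ) (T : Set ℕ) (h : List Bool) : Prop :=
  ∀ v ∈ Q h, ∃ s ∈ T, s ≤ h.length ∧ v ∈ Q (h.take s)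

lemma isForcedQuery_histSeq {T : Set ℕ} {y : ℕ → Bool} {t : ℕ} :
    IsForcedQuery Q T (histSeq y t) ↔
      ∀ v ∈ Q (histSeq y t), ∃ s ∈ T, v ∈ Q (histSeq y s) ∧ s ≤ t := by
  refine forall₂_congr fun v _ => exists_congr fun s => and_congr_right fun _ => ?_
  rw [length_histSeq, and_comm]
  exact and_congr_left fun hst => by rw [take_histSeq y hst]

lemma exists_map_eq_of_forall_mem_range {α β : Type*} {f : α → β} {e : Sym2 β}
    (h : ∀ v ∈ e, v ∈ Set.range f) : ∃ e' : Sym2 α, e'.map f = e := by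
  induction e using Sym2.ind with
  | _ u v =>
  obtain ⟨a, rfl⟩ := h u (Sym2.mem_mk_left u v)
  obtain ⟨b, rfl⟩ := h v (Sym2.mem_mk_right _ v)
  exact ⟨s(a, b), rfl⟩

/-- The play in which `Q` receives the answers `x` builds a copy of the complete graph on `V`, with
vertices given by `f` and the edge `e` found at time `τ e`. -/
structure IsTimedCopy (Q : List Bool → Sym2 ℕ) (x : Fin N → Bool) (f : V → ℕ)
    (τ : Sym2 V → Fin N) : Prop where
  injective : Function.Injective f
  query_eq {e : Sym2 V} : ¬ e.IsDiag → Q (histSeq (extSeq x) (τ e)) = e.map f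
  success {e : Sym2 V} : ¬ e.IsDiag → x (τ e) = true

lemma ContainsCopy.exists_isTimedCopy [Nontrivial V] {x : Fin N → Bool}
    (h : ContainsCopy (⊤ : SimpleGraph V) (fun t => Q (histSeq (extSeq x) t)) (extSeq x) N) :
    ∃ (f : V → ℕ) (τ : Sym2 V → Fin N), IsTimedCopy Q x f τ := by
  obtain ⟨f, hf, hcopy⟩ := h
  have hedge {u v : V} (huv : u ≠ v) :
      ∃ t : Fin N, Q (histSeq (extSeq x) t) = s(f u, f v) ∧ x t = true := by
    obtain ⟨t, ht, hQt, hxt⟩ := hcopy u v huv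
    exact ⟨⟨t, ht⟩, hQt, extSeq_val x ⟨t, ht⟩ ▸ hxt⟩
  obtain ⟨u₀, v₀, h₀⟩ := exists_pair_ne V
  obtain ⟨t₀, -⟩ := hedge h₀
  have htime (e : Sym2 V) : ∃ t : Fin N, ¬ e.IsDiag →
      Q (histSeq (extSeq x) t) = e.map f ∧ x t = true := by
    by_cases he : e.IsDiag
    · exact ⟨t₀, fun hd => (hd he).elim⟩
    · induction e using Sym2.ind with
      | _ u v =>
      obtain ⟨t, ht⟩ := hedge fun huv : u = v => he huv
      exact ⟨t, fun _ => ht⟩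
  choose τ hτ using htime
  exact ⟨f, τ, hf, fun he => (hτ _ he).1, fun he => (hτ _ he).2⟩

namespace IsTimedCopy

variable {x : Fin N → Bool} {f : V → ℕ} {τ : Sym2 V → Fin N}

lemma injOn (h : IsTimedCopy Q x f τ) : Set.InjOn τ Sym2.diagSetᶜ := by
  intro e he e' he' hee'
  apply Sym2.map.injective h.injective
  rw [← h.query_eq he, ← h.query_eq he', hee']

lemma isForcedQuery_of_isForced (h : IsTimedCopy Q x f τ) {S : Set (Sym2 V)}
    (hS : ∀ s ∈ S, ¬ s.IsDiag) {e : Sym2 V} (he : ¬ e.IsDiag)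
    (hforced : IsForced (fun e => (τ e : ℕ)) S e) :
    IsForcedQuery Q ((fun e => (τ e : ℕ)) '' S) (histSeq (extSeq x) (τ e)) := by
  rw [isForcedQuery_histSeq, h.query_eq he]
  intro v hv
  obtain ⟨u, hu, rfl⟩ := Sym2.mem_map.1 hv
  obtain ⟨s, hs, hus, hle⟩ := hforced u hu
  refine ⟨τ s, Set.mem_image_of_mem _ hs, ?_, hle⟩
  rw [h.query_eq (hS s hs)]
  exact Sym2.mem_map.2 ⟨u, hus, rfl⟩

lemma exists_eq_of_isForcedQuery (h : IsTimedCopy Q x f τ) (hQ : ValidBuilder Q)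
    {S : Set (Sym2 V)} (hS : ∀ s ∈ S, ¬ s.IsDiag) {t : Fin N}
    (ht : IsForcedQuery Q ((fun e => (τ e : ℕ)) '' S) (histSeq (extSeq x) t)) :
    ∃ e, ¬ e.IsDiag ∧ τ e = t := by
  have hrange : ∀ v ∈ Q (histSeq (extSeq x) t), v ∈ Set.range f := by
    intro v hv
    obtain ⟨_, ⟨s, hs, rfl⟩, hvs, -⟩ := isForcedQuery_histSeq.1 ht v hv
    rw [h.query_eq (hS s hs)] at hvs
    obtain ⟨u, -, rfl⟩ := Sym2.mem_map.1 hvs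
    exact ⟨u, rfl⟩
  obtain ⟨e, he⟩ := exists_map_eq_of_forall_mem_range hrange
  have hd : ¬ e.IsDiag := by
    rw [← Sym2.isDiag_map h.injective, he]
    exact hQ.1 _
  exact ⟨e, hd, Fin.ext (hQ.injective_histSeq_s17 (extSeq x) ((h.query_eq hd).trans he))⟩

lemma secures [Fintype V] (h : IsTimedCopy Q x f τ) (hQ : ValidBuilder Q) {S : Set (Sym2 V)}
    (hS : ∀ s ∈ S, ¬ s.IsDiag) :
    Secures (IsForcedQuery Q ((fun e => (τ e : ℕ)) '' S))
      (Finset.card {e : Sym2 V | ¬ e.IsDiag ∧ IsForced (fun e => (τ e : ℕ)) S e}) x := by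
  constructor
  · intro t ht
    obtain ⟨e, he, rfl⟩ := h.exists_eq_of_isForcedQuery hQ hS ht
    exact h.success he
  · refine Finset.card_le_card_of_injOn τ ?_ (h.injOn.mono fun e he => ?_)
    · intro e he
      obtain ⟨hd, hf⟩ := (Finset.mem_filter_univ _).1 he
      exact (Finset.mem_filter_univ _).2 (h.isForcedQuery_of_isForced hS hd hf)
    · exact ((Finset.mem_filter_univ _).1 he).1

end IsTimedCopy

lemma queryProb_top_le [Fintype V] [Nontrivial V] {c : ℕ} (hc : 2 * c ≤ Fintype.card V)
    (hQ : ValidBuilder Q) (N : ℕ) {p : ℝ} (h0 : 0 ≤ p) (h1 : p ≤ 1) :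
    queryProb (⊤ : SimpleGraph V) Q N p ≤
      (N : ℝ) ^ (Fintype.card V - c) * p ^ ((Fintype.card V).choose 2 - c * (c - 1)) := by
  have hsecures (x : Fin N → Bool)
      (hx : ContainsCopy (⊤ : SimpleGraph V) (fun t => Q (histSeq (extSeq x) t)) (extSeq x) N) :
      ∃ T : Fin (Fintype.card V - c) → Fin N, Secures
        (IsForcedQuery Q (Set.range fun k => (T k : ℕ)))
        ((Fintype.card V).choose 2 - c * (c - 1)) x := by
    obtain ⟨f, τ, h⟩ := hx.exists_isTimedCopy
    obtain ⟨σ, hσ, hcard⟩ := exists_choose_two_le_card_isForced hc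
      (Fin.val_injective.comp_injOn h.injOn)
    have hS := h.secures hQ (Set.forall_mem_range.2 hσ)
    rw [← Set.range_comp] at hS
    exact ⟨τ ∘ σ, hS.1, hcard.trans hS.2⟩
  simpa using queryProb_le_card_mul_pow h0 h1 _ _ hsecures

end Guessing

section Existence

lemma validBuilder_of_injective {q : ℕ → Sym2 ℕ} (hq : Function.Injective q)
    (hd : ∀ t, ¬ (q t).IsDiag) : ValidBuilder fun h => q h.length := by
  refine ⟨fun h => hd _, fun h i hi => hq.ne ?_⟩
  rw [List.length_take, min_eq_left hi.le]
  exact hi.ne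

lemma injective_map_prodMk {α V W : Type*} {f : α × V → W} (hf : Function.Injective f) :
    Function.Injective fun x : α × Sym2 V => x.2.map fun v => f (x.1, v) := by
  rintro ⟨a, e⟩ ⟨b, e'⟩ h
  simp only at h
  obtain ⟨w, -, hw⟩ := Sym2.mem_map.1 (h ▸ Sym2.mem_map.2 ⟨_, e.out_fst_mem, rfl⟩)
  obtain rfl : b = a := congrArg Prod.fst (hf hw)
  rw [Sym2.map.injective (hf.comp (Prod.mk_right_injective b)) h]

/-- `q` queries all pairs of a copy of `V` in every block of `M` consecutive times. -/
def QueriesCopies (V : Type*) (M : ℕ) (q : ℕ → Sym2 ℕ) : Prop :=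
  ∀ a : ℕ, ∃ f : V → ℕ, Function.Injective f ∧
    ∀ e : Sym2 V, ¬ e.IsDiag → ∃ b : Fin M, q (b + M * a) = e.map f

lemma exists_queriesCopies (V : Type*) [Finite V] [Nontrivial V] :
    ∃ (M : ℕ) (q : ℕ → Sym2 ℕ), QueriesCopies V M q ∧
      Function.Injective q ∧ ∀ t, ¬ (q t).IsDiag := by
  obtain ⟨ι, hι⟩ := Countable.exists_injective_nat (ℕ × V)
  have hιa (a : ℕ) : Function.Injective fun v => ι (a, v) := hι.comp (Prod.mk_right_injective a)
  obtain ⟨M, ⟨ε⟩⟩ := Finite.exists_equiv_fin {e : Sym2 V // ¬ e.IsDiag}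
  obtain ⟨u, v, huv⟩ := exists_pair_ne V
  have : NeZero M := ⟨(Fin.pos (ε ⟨s(u, v), huv⟩)).ne'⟩
  let pair : ℕ × Fin M → ℕ × Sym2 V := Prod.map id fun b => (ε.symm b : Sym2 V)
  have hpair : Function.Injective pair :=
    Function.injective_id.prodMap (Subtype.val_injective.comp ε.symm.injective)
  let q : ℕ → Sym2 ℕ := fun t =>
    (pair (Nat.divModEquiv M t)).2.map fun v => ι ((pair (Nat.divModEquiv M t)).1, v)
  refine ⟨M, q, fun a => ⟨fun v => ι (a, v), hιa a, fun e he => ⟨ε ⟨e, he⟩, ?_⟩⟩,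
    (injective_map_prodMk hι).comp (hpair.comp (Nat.divModEquiv M).injective), fun t => ?_⟩
  · have hdm : Nat.divModEquiv M (ε ⟨e, he⟩ + M * a) = (a, ε ⟨e, he⟩) := by
      rw [← Equiv.eq_symm_apply]
      simp [add_comm, mul_comm]
    simp only [q, hdm]
    simp [pair]
  · rw [Sym2.isDiag_map (hιa _)]
    exact (ε.symm _).2

lemma sum_weight_forall_block (p : ℝ) (r M : ℕ) (P : (Fin M → Bool) → Prop)
    [DecidablePred P] :
    ∑ x : Fin (r * M) → Bool with ∀ a, P fun b => x (finProdFinEquiv (a, b)), weight p x =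
      (∑ z : Fin M → Bool with P z, weight p z) ^ r := by
  let blocks : (Fin (r * M) → Bool) ≃ (Fin r → Fin M → Bool) :=
    (Equiv.arrowCongr finProdFinEquiv.symm (Equiv.refl Bool)).trans (Equiv.curry _ _ _)
  have hweight (x : Fin (r * M) → Bool) : weight p x = ∏ a, weight p (blocks x a) := by
    simp only [weight]
    rw [← finProdFinEquiv.prod_comp, Fintype.prod_prod_type]
    rfl
  rw [Finset.sum_filter, Finset.sum_filter, Fintype.sum_pow, ← blocks.sum_comp]
  refine Finset.sum_congr rfl fun x _ => ?_
  simp only [Finset.prod_ite_zero, Finset.mem_univ, true_imp_iff, ← hweight]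
  rfl

lemma sum_weight_exists_false (p : ℝ) (M : ℕ) :
    ∑ z : Fin M → Bool with ∃ b, z b = false, weight p z = 1 - p ^ M := by
  have hall : (Finset.univ.filter fun z : Fin M → Bool => ¬ ∃ b, z b = false) =
      {fun _ => true} := by
    ext z
    simp [funext_iff]
  rw [← sum_weight p M,
    ← Finset.sum_filter_add_sum_filter_not Finset.univ fun z => ∃ b, z b = false, hall,
    Finset.sum_singleton]
  simp [weight]

lemma QueriesCopies.containsCopy {V : Type*} {M : ℕ} {q : ℕ → Sym2 ℕ} (h : QueriesCopies V M q)
    (H : SimpleGraph V) {r : ℕ} {x : Fin (r * M) → Bool} {a : Fin r}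
    (ha : ∀ b, x (finProdFinEquiv (a, b)) = true) :
    ContainsCopy H q (extSeq x) (r * M) := by
  obtain ⟨f, hf, hq⟩ := h a
  refine ⟨f, hf, fun u v huv => ?_⟩
  obtain ⟨b, hb⟩ := hq s(u, v) huv.ne
  exact ⟨finProdFinEquiv (a, b), Fin.is_lt _, hb, (extSeq_val x _).trans (ha b)⟩

lemma exists_half_le_queryProb {V : Type*} [Finite V] [Nontrivial V] (H : SimpleGraph V) {p : ℝ}
    (h0 : 0 < p) (h1 : p ≤ 1) :
    ∃ N Q, ValidBuilder Q ∧ 1 / 2 ≤ queryProb H Q N p := by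
  obtain ⟨M, q, hcopies, hq, hd⟩ := exists_queriesCopies V
  obtain ⟨r, hr⟩ : ∃ r, (1 - p ^ M) ^ r < 1 / 2 :=
    exists_pow_lt_of_lt_one one_half_pos (sub_lt_self 1 (pow_pos h0 M))
  refine ⟨r * M, fun h => q h.length, validBuilder_of_injective hq hd, ?_⟩
  have hfail : ∑ x : Fin (r * M) → Bool with ¬ ContainsCopy H q (extSeq x) (r * M), weight p x ≤
      (1 - p ^ M) ^ r := by
    rw [← sum_weight_exists_false, ← sum_weight_forall_block]
    refine Finset.sum_le_sum_of_subset_of_nonneg (Finset.monotone_filter_right _ fun x _ hx a => ?_)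
      fun x _ _ => weight_nonneg h0.le h1 x
    by_contra! hfull
    exact hx (hcopies.containsCopy H (a := a) (by simpa using hfull))
  have htotal := sum_weight p (r * M)
  rw [← Finset.sum_filter_add_sum_filter_not _ fun x => ContainsCopy H q (extSeq x) (r * M)]
    at htotal
  simp only [queryProb_eq_sum_filter, length_histSeq]
  linarith

-- Since `sInf ∅ = 0` in `ℕ`, this needs a strategy that succeeds with probability at least `1 / 2`.
lemma fQuery_spec {V : Type*} [Finite V] [Nontrivial V] (H : SimpleGraph V) {p : ℝ}
    (h0 : 0 < p) (h1 : p ≤ 1) :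
    ∃ Q, ValidBuilder Q ∧ 1 / 2 ≤ queryProb H Q (fQuery H p) p :=
  Nat.sInf_mem (exists_half_le_queryProb H h0 h1)

end Existence

lemma mul_sub_one_le_choose_two {m c : ℕ} (hc : 2 * c ≤ m) : c * (c - 1) ≤ m.choose 2 := by
  have hle := Nat.choose_le_choose 2 (mul_comm c 2 ▸ hc : c * 2 ≤ m)
  rw [← two_mul_mul_sub_one_add_eq_choose] at hle
  omega

lemma mul_rpow_neg_div_le_of_half_le {N p : ℝ} {k E : ℕ} (hk : k ≠ 0) (hN : 0 ≤ N) (h0 : 0 < p)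
    (h : 1 / 2 ≤ N ^ k * p ^ E) : 1 / 4 * p ^ (-((E : ℝ) / k)) ≤ N := by
  refine le_of_pow_le_pow_left₀ hk hN ?_
  have hpow : (p ^ (-((E : ℝ) / k))) ^ k = (p ^ E)⁻¹ := by
    rw [← Real.rpow_natCast, ← Real.rpow_mul h0.le, neg_mul,
      div_mul_cancel₀ _ (Nat.cast_ne_zero.2 hk), Real.rpow_neg h0.le, Real.rpow_natCast]
  rw [mul_pow, hpow, ← div_eq_mul_inv, div_le_iff₀ (pow_pos h0 E)]
  calc (1 / 4 : ℝ) ^ k ≤ 1 / 4 := pow_le_of_le_one (by norm_num) (by norm_num) hk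
    _ ≤ 1 / 2 := by norm_num
    _ ≤ N ^ k * p ^ E := h

theorem stmt17 (m : ℕ) (hm : 3 ≤ m) (c : ℕ) (hc : (c : ℝ) ≤ (m : ℝ) / 2)
    (p : ℝ) (hp : p ∈ Set.Ioo (0 : ℝ) 1) :
    (1 / 4 : ℝ) * p ^ (-(((m.choose 2 : ℝ) - (c : ℝ) * ((c : ℝ) - 1)) / ((m : ℝ) - (c : ℝ)))) ≤
      (fQuery (K m) p : ℝ) := by
  have hcm : 2 * c ≤ m := by
    have : (2 * c : ℝ) ≤ m := by linarith
    exact_mod_cast this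
  have : Nontrivial (Fin m) := Fin.nontrivial_iff_two_le.2 (by omega)
  have hexp : (m.choose 2 : ℝ) - c * ((c : ℝ) - 1) = (m.choose 2 - c * (c - 1) : ℕ) := by
    rw [Nat.cast_sub (mul_sub_one_le_choose_two hcm), Nat.cast_mul]
    cases c <;> simp
  obtain ⟨Q, hQ, hhalf⟩ := fQuery_spec (K m) hp.1 hp.2.le
  have hle := queryProb_top_le (V := Fin m) (by simpa using hcm) hQ (fQuery (K m) p) hp.1.le hp.2.le
  rw [Fintype.card_fin] at hle
  rw [hexp, ← Nat.cast_sub (by omega)]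
  exact mul_rpow_neg_div_le_of_half_le (by omega) (Nat.cast_nonneg _) hp.1 (hhalf.trans hle)

end OnlineRamseyGame
end
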